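/- arXiv:2210.04649 — 3 statements merged into one kernel-verified Lean document; each statement's English description precedes it below -/
import Mathlib

section
/- Every decomposable claw-free graph G with maximum degree 3 satisfies χ'_irr(G) ≤ 3, i.e., G admits a locally irregular edge-coloring using at most 3 colors. -/
/-- A graph is *locally irregular* if no two adjacent vertices have the same degree. -/
def LocallyIrregular {V : Type*} (G : SimpleGraph V) : Prop :=
  ∀ ⦃u v : V⦄, G.Adj u v → (G.neighborSet u).ncard ≠ (G.neighborSet v).ncard

/-- `HasLIEC G k` : `G` admits a locally irregular edge-coloring using at most `k` colors,
i.e. an assignment of one of `k` colors to every edge such that the edges of each fixed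
color induce a locally irregular graph. -/
def HasLIEC {V : Type*} (G : SimpleGraph V) (k : ℕ) : Prop :=
  ∃ c : Sym2 V → Fin k, ∀ i : Fin k,
    LocallyIrregular (SimpleGraph.fromEdgeSet {e | e ∈ G.edgeSet ∧ c e = i})

/-- A graph is *decomposable* if it admits a locally irregular edge-coloring. -/
def Decomposable {V : Type*} (G : SimpleGraph V) : Prop :=
  ∃ k : ℕ, HasLIEC G k

/-- A graph is *claw-free* if it contains no induced subgraph isomorphic to `K_{1,3}`. -/
def ClawFree {V : Type*} (G : SimpleGraph V) : Prop :=
  ¬ ∃ v a b c : V, a ≠ b ∧ a ≠ c ∧ b ≠ c ∧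
      G.Adj v a ∧ G.Adj v b ∧ G.Adj v c ∧ ¬ G.Adj a b ∧ ¬ G.Adj a c ∧ ¬ G.Adj b c

/-- `G` has maximum degree at most `d`. -/
def MaxDegreeLE {V : Type*} (G : SimpleGraph V) (d : ℕ) : Prop :=
  ∀ v : V, (G.neighborSet v).ncard ≤ d

/-!
Call an edge inner if it lies in a triangle and outer otherwise. In a claw-free subcubic graph the
components of the inner edges, the blocks, are single vertices, triangles, diamonds and complete
graphs on four vertices, and a vertex with an inner edge has at most one outer edge.

Locally irregular colorings of arbitrarily many colors only serve to orient the outer edges: the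
degrees at the ends of an edge, in its own color, are distinct elements of `{1, 2, 3}`, and calling
the end of degree 2, or of degree 3 against 1, the source makes every vertex a source of all or none
of its outer edges and gives every triangle block a source.

Such an orientation is conversely enough to color with three colors. Give each source `v` one color
`κ v` for its outer edges and prescribe its degree in that color, 2 or 3; the sink at the other end
only has to avoid that degree. The blocks can then be colored independently, by a finite check, once
the prescribed degrees are propagated along chains of triangles and `κ` takes exactly two values on
a certain set of at most three sources around each block. A vertex is adjacent to at most two blocks
and each block forbids at most one color at each of its vertices, so a `κ` minimizing the number of
violated conditions violates none: a vertex of a violated one could be recolored.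
-/

namespace LIEC

section ColorDegree

variable {V α : Type*} {G : SimpleGraph V}

/-- The number of edges of color `i` at `v`. -/
noncomputable def colorDegree (G : SimpleGraph V) (c : Sym2 V → α) (v : V) (i : α) : ℕ :=
  {w | G.Adj v w ∧ c s(v, w) = i}.ncard

theorem hasLIEC_iff {k : ℕ} : HasLIEC G k ↔ ∃ c : Sym2 V → Fin k, ∀ u v, G.Adj u v →
    colorDegree G c u (c s(u, v)) ≠ colorDegree G c v (c s(u, v)) := by
  have neighborSet_eq (c : Sym2 V → Fin k) (i : Fin k) (v : V) :
      (SimpleGraph.fromEdgeSet {e | e ∈ G.edgeSet ∧ c e = i}).neighborSet v =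
        {w | G.Adj v w ∧ c s(v, w) = i} := by
    ext w
    simpa [and_assoc] using fun h _ ↦ h.ne
  refine exists_congr fun c ↦ ⟨fun h u v huv ↦ ?_, fun h i u v huv ↦ ?_⟩
  · have := h (c s(u, v)) (u := u) (v := v) (by simp [huv, huv.ne])
    rwa [neighborSet_eq, neighborSet_eq] at this
  · obtain ⟨⟨hadj, rfl⟩, -⟩ := (SimpleGraph.fromEdgeSet_adj _).1 huv
    rw [neighborSet_eq, neighborSet_eq]
    exact h u v hadj

theorem exists_sym2_eq (F : V → V → α) (hF : ∀ u v, G.Adj u v → F u v = F v u) :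
    ∃ c : Sym2 V → α, ∀ u v, G.Adj u v → c s(u, v) = F u v := by
  refine ⟨fun e ↦ F e.out.1 e.out.2, fun u v huv ↦ ?_⟩
  have h : s(s(u, v).out.1, s(u, v).out.2) = s(u, v) := Quot.out_eq _
  rcases Sym2.eq_iff.1 h with ⟨h₁, h₂⟩ | ⟨h₁, h₂⟩
  · simp only [h₁, h₂]
  · simp only [h₁, h₂, hF u v huv]

end ColorDegree

section Blocks

variable {V : Type*} {G : SimpleGraph V} {u v w x a b c p m n q : V}

/-- The *inner* edges of `G` are those contained in a triangle. -/
def innerGraph (G : SimpleGraph V) : SimpleGraph V where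
  Adj u v := G.Adj u v ∧ ∃ w, G.Adj u w ∧ G.Adj v w
  symm := ⟨fun _ _ ⟨h, w, hu, hv⟩ ↦ ⟨h.symm, w, hv, hu⟩⟩

/-- The *outer* edges of `G` are those contained in no triangle. -/
def outerGraph (G : SimpleGraph V) : SimpleGraph V := G \ innerGraph G

theorem innerGraph_adj_of_triangle (hab : G.Adj a b) (hbc : G.Adj b c) (hac : G.Adj a c) :
    (innerGraph G).Adj a b :=
  ⟨hab, c, hac, hbc⟩

theorem not_adj_of_outer_of_adj (huv : (outerGraph G).Adj u v) (huw : G.Adj u w) : ¬ G.Adj v w :=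
  fun hvw ↦ huv.2 ⟨huv.1, w, huw, hvw⟩

theorem inner_or_outer (h : G.Adj u v) : (innerGraph G).Adj u v ∨ (outerGraph G).Adj u v := by
  by_cases hi : (innerGraph G).Adj u v
  · exact .inl hi
  · exact .inr ⟨h, hi⟩

theorem eq_or_eq_or_eq_of_adj [Finite V] (hdeg : MaxDegreeLE G 3)
    (ha : G.Adj v a) (hb : G.Adj v b) (hc : G.Adj v c) (hab : a ≠ b) (hac : a ≠ c) (hbc : b ≠ c)
    (hw : G.Adj v w) : w = a ∨ w = b ∨ w = c := by
  have hcard : ({a, b, c} : Set V).ncard = 3 := Set.ncard_eq_three.2 ⟨a, b, c, hab, hac, hbc, rfl⟩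
  have hsub : {a, b, c} ⊆ G.neighborSet v := by
    rintro _ (rfl | rfl | rfl) <;> assumption
  have heq : {a, b, c} = G.neighborSet v :=
    Set.eq_of_subset_of_ncard_le hsub (by rw [hcard]; exact hdeg v)
  have hmem : w ∈ G.neighborSet v := hw
  rwa [← heq] at hmem

theorem eq_or_eq_of_outer_of_outer (hclaw : ClawFree G) (hv : (outerGraph G).Adj u v)
    (hw : (outerGraph G).Adj u w) (hvw : v ≠ w) (hx : G.Adj u x) : x = v ∨ x = w := by
  by_contra! hne
  exact hclaw ⟨u, v, w, x, hvw, hne.1.symm, hne.2.symm, hv.1, hw.1, hx,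
    not_adj_of_outer_of_adj hv hw.1, not_adj_of_outer_of_adj hv hx, not_adj_of_outer_of_adj hw hx⟩

theorem outer_unique (hclaw : ClawFree G) (hx : (innerGraph G).Adj u x)
    (hv : (outerGraph G).Adj u v) (hw : (outerGraph G).Adj u w) : v = w := by
  by_contra hvw
  rcases eq_or_eq_of_outer_of_outer hclaw hv hw hvw hx.1 with rfl | rfl
  exacts [hv.2 hx, hw.2 hx]

theorem mem_of_reachable {H : SimpleGraph V} {s : Set V}
    (hs : ∀ ⦃u v⦄, u ∈ s → H.Adj u v → v ∈ s) (hu : u ∈ s) (h : H.Reachable u v) : v ∈ s := by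
  obtain ⟨W⟩ := h
  induction W with
  | nil => exact hu
  | cons hadj _ ih => exact ih (hs hu hadj)

/-- `ι` identifies `H` with a union of connected components of `innerGraph G`. -/
structure IsBlock {J : Type*} (G : SimpleGraph V) (H : SimpleGraph J) (ι : J → V) : Prop where
  injective : Function.Injective ι
  adj_iff : ∀ i w, (innerGraph G).Adj (ι i) w ↔ ∃ j, H.Adj i j ∧ ι j = w

theorem IsBlock.exists_eq_of_reachable {J : Type*} {H : SimpleGraph J} {ι : J → V}
    (h : IsBlock G H ι) {i : J} (hw : (innerGraph G).Reachable (ι i) w) : ∃ j, ι j = w := by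
  refine mem_of_reachable (s := Set.range ι) ?_ ⟨i, rfl⟩ hw
  rintro _ v ⟨j, rfl⟩ hv
  obtain ⟨k, -, rfl⟩ := (h.adj_iff j v).1 hv
  exact ⟨k, rfl⟩

/-- The triangle `abc` shares no edge with another triangle. -/
structure IsTriangleBlock (G : SimpleGraph V) (a b c : V) : Prop where
  adj_fst_iff : ∀ w, (innerGraph G).Adj a w ↔ w = b ∨ w = c
  adj_snd_iff : ∀ w, (innerGraph G).Adj b w ↔ w = c ∨ w = a
  adj_trd_iff : ∀ w, (innerGraph G).Adj c w ↔ w = a ∨ w = b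

namespace IsTriangleBlock

theorem rotate (h : IsTriangleBlock G a b c) : IsTriangleBlock G b c a :=
  ⟨h.2, h.3, h.1⟩

theorem swap (h : IsTriangleBlock G a b c) : IsTriangleBlock G a c b :=
  ⟨fun w ↦ (h.1 w).trans or_comm, fun w ↦ (h.3 w).trans or_comm, fun w ↦ (h.2 w).trans or_comm⟩

theorem inner (h : IsTriangleBlock G a b c) : (innerGraph G).Adj a b :=
  (h.1 b).2 (.inl rfl)

theorem ne (h : IsTriangleBlock G a b c) : a ≠ b :=
  h.inner.ne

theorem eq_or_eq (h : IsTriangleBlock G a b c) {b' c' : V} (h' : IsTriangleBlock G a b' c') :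
    b' = b ∧ c' = c ∨ b' = c ∧ c' = b := by
  have hb := (h.1 b').1 h'.inner
  have hc := (h.1 c').1 h'.swap.inner
  have := h'.rotate.ne
  grind

theorem isBlock (h : IsTriangleBlock G a b c) : IsBlock G ⊤ ![a, b, c] where
  injective := by
    have := h.ne
    have := h.rotate.ne
    have := h.rotate.rotate.ne
    intro i j
    fin_cases i <;> fin_cases j <;> simp <;> grind
  adj_iff i w := by
    fin_cases i <;> simp [Fin.exists_fin_succ, h.1, h.2, h.3] <;> grind

end IsTriangleBlock

/-- The complete graph on four vertices without the edge `03`. -/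
def diamondGraph : SimpleGraph (Fin 4) := SimpleGraph.deleteEdges ⊤ {s(0, 3)}

instance : DecidableRel diamondGraph.Adj :=
  fun i j ↦ decidable_of_iff (i ≠ j ∧ s(i, j) ≠ s(0, 3)) (by simp [diamondGraph])

/-- The triangles `pmn` and `mnq` share the edge `mn`; the tips `p` and `q` may be adjacent. -/
structure IsDiamond (G : SimpleGraph V) (p m n q : V) : Prop where
  adj_left_fst : G.Adj p m
  adj_left_snd : G.Adj p n
  adj_centers : G.Adj m n
  adj_right_fst : G.Adj q m
  adj_right_snd : G.Adj q n
  left_ne_right : p ≠ q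

namespace IsDiamond

theorem swap_centers (h : IsDiamond G p m n q) : IsDiamond G p n m q :=
  ⟨h.2, h.1, h.3.symm, h.5, h.4, h.6⟩

theorem swap_tips (h : IsDiamond G p m n q) : IsDiamond G q m n p :=
  ⟨h.4, h.5, h.3, h.1, h.2, h.6.symm⟩

theorem exchange (h : IsDiamond G p m n q) (hpq : G.Adj p q) : IsDiamond G m p q n :=
  ⟨h.1.symm, h.4.symm, hpq, h.2.symm, h.5.symm, h.3.ne⟩

theorem adj_center [Finite V] (hdeg : MaxDegreeLE G 3) (h : IsDiamond G p m n q)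
    (hw : G.Adj m w) : w = p ∨ w = n ∨ w = q :=
  eq_or_eq_or_eq_of_adj hdeg h.1.symm h.3 h.4.symm h.2.ne h.6 h.5.ne.symm hw

theorem inner_center_iff [Finite V] (hdeg : MaxDegreeLE G 3) (h : IsDiamond G p m n q) :
    (innerGraph G).Adj m w ↔ w = p ∨ w = n ∨ w = q := by
  refine ⟨fun hw ↦ h.adj_center hdeg hw.1, ?_⟩
  rintro (rfl | rfl | rfl)
  exacts [⟨h.1.symm, n, h.3, h.2⟩, ⟨h.3, p, h.1.symm, h.2.symm⟩, ⟨h.4.symm, n, h.3, h.5⟩]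

theorem inner_tip_iff [Finite V] (hdeg : MaxDegreeLE G 3) (h : IsDiamond G p m n q)
    (hpq : ¬ G.Adj p q) : (innerGraph G).Adj p w ↔ w = m ∨ w = n := by
  refine ⟨fun ⟨hpw, y, hpy, hwy⟩ ↦ ?_, ?_⟩
  · by_contra! hne
    rcases eq_or_eq_or_eq_of_adj hdeg h.1 h.2 hpw h.3.ne hne.1.symm hne.2.symm hpy with
      rfl | rfl | rfl
    · have := h.adj_center hdeg hwy.symm
      grind [SimpleGraph.irrefl]
    · have := h.swap_centers.adj_center hdeg hwy.symm
      grind [SimpleGraph.irrefl]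
    · exact G.irrefl hwy
  · rintro (rfl | rfl)
    exacts [⟨h.1, n, h.2, h.3⟩, ⟨h.2, m, h.1, h.3.symm⟩]

theorem injective (h : IsDiamond G p m n q) : Function.Injective ![p, m, n, q] := by
  have := h.1.ne
  have := h.2.ne
  have := h.3.ne
  have := h.4.ne
  have := h.5.ne
  have := h.6
  intro i j
  fin_cases i <;> fin_cases j <;> simp <;> grind

theorem isBlock [Finite V] (hdeg : MaxDegreeLE G 3) (h : IsDiamond G p m n q)
    (hpq : ¬ G.Adj p q) : IsBlock G diamondGraph ![p, m, n, q] where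
  injective := h.injective
  adj_iff i w := by
    have hp := h.inner_tip_iff hdeg hpq (w := w)
    have hq := h.swap_tips.inner_tip_iff hdeg (mt .symm hpq) (w := w)
    have hm := h.inner_center_iff hdeg (w := w)
    have hn := h.swap_centers.inner_center_iff hdeg (w := w)
    fin_cases i <;> simp [Fin.exists_fin_succ, diamondGraph, hp, hq, hm, hn] <;> grind

theorem isBlock_completeGraph [Finite V] (hdeg : MaxDegreeLE G 3) (h : IsDiamond G p m n q)
    (hpq : G.Adj p q) : IsBlock G ⊤ ![p, m, n, q] where
  injective := h.injective
  adj_iff i w := by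
    have hp := (h.exchange hpq).inner_center_iff hdeg (w := w)
    have hq := (h.exchange hpq).swap_centers.inner_center_iff hdeg (w := w)
    have hm := h.inner_center_iff hdeg (w := w)
    have hn := h.swap_centers.inner_center_iff hdeg (w := w)
    fin_cases i <;> simp [Fin.exists_fin_succ, hp, hq, hm, hn] <;> grind

end IsDiamond

theorem isDiamond_of_triangle_of_inner [Finite V] (hdeg : MaxDegreeLE G 3) (hab : G.Adj a b)
    (hbc : G.Adj b c) (hac : G.Adj a c) (hx : (innerGraph G).Adj a x) (hxb : x ≠ b) (hxc : x ≠ c) :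
    IsDiamond G c a b x ∨ IsDiamond G b a c x := by
  obtain ⟨hax, y, hay, hxy⟩ := hx
  rcases eq_or_eq_or_eq_of_adj hdeg hab hac hax hbc.ne hxb.symm hxc.symm hay with rfl | rfl | rfl
  · exact .inl ⟨hac.symm, hbc.symm, hab, hax.symm, hxy, hxc.symm⟩
  · exact .inr ⟨hab.symm, hbc, hac, hax.symm, hxy, hxb.symm⟩
  · exact absurd hxy G.irrefl

theorem block_cases [Finite V] (hdeg : MaxDegreeLE G 3) (v : V) :
    (∀ w, ¬ (innerGraph G).Adj v w) ∨ (∃ b c, IsTriangleBlock G v b c) ∨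
      ∃ p m n q, IsDiamond G p m n q ∧ (v = p ∨ v = m) := by
  by_contra! ⟨⟨b, hvb, c, hvc, hbc⟩, htriangle, hdiamond⟩
  have closed {a b c : V} (hab : G.Adj a b) (hbc : G.Adj b c) (hac : G.Adj a c)
      (hv : v = a ∨ v = b ∨ v = c) (w : V) : (innerGraph G).Adj a w ↔ w = b ∨ w = c := by
    refine ⟨fun hw ↦ ?_, ?_⟩
    · by_contra! hne
      rcases isDiamond_of_triangle_of_inner hdeg hab hbc hac hw hne.1 hne.2 with h | h
      all_goals
        have := hdiamond _ _ _ _ h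
        have := hdiamond _ _ _ _ h.swap_centers
        grind
    · rintro (rfl | rfl)
      exacts [innerGraph_adj_of_triangle hab hbc hac,
        innerGraph_adj_of_triangle hac hbc.symm hab]
  exact htriangle b c ⟨closed hvb hbc hvc (.inl rfl),
    closed hbc hvc.symm hvb.symm (.inr (.inr rfl)), closed hvc.symm hvb hbc.symm (.inr (.inl rfl))⟩

end Blocks

section Sources

variable {V α : Type*} {G : SimpleGraph V} {χ : Sym2 V → α} {a b c u v w : V}

/-- A choice of one end, the *source*, of every outer edge such that a vertex is a source of either
all or none of its outer edges. Sources are not leaves, and every triangle block contains one. -/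
structure IsSourceSet (G : SimpleGraph V) (S : Set V) : Prop where
  mem_iff : ∀ ⦃u v⦄, (outerGraph G).Adj u v → (u ∈ S ↔ v ∉ S)
  exists_outer : ∀ ⦃u⦄, u ∈ S → ∃ v, (outerGraph G).Adj u v
  exists_adj_ne : ∀ ⦃u⦄, u ∈ S → ∀ v, ∃ w, G.Adj u w ∧ w ≠ v
  triangle : ∀ ⦃a b c⦄, IsTriangleBlock G a b c → a ∈ S ∨ b ∈ S ∨ c ∈ S

/-- In a locally irregular coloring of a subcubic graph, the edge `uv` has distinct degrees in
`{1, 2, 3}` at its ends; `u` dominates `v` if the pair of degrees is `(2, 1)`, `(2, 3)` or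
`(3, 1)`. -/
def Dominates (G : SimpleGraph V) (χ : Sym2 V → α) (u v : V) : Prop :=
  colorDegree G χ u (χ s(u, v)) = 2 ∨
    colorDegree G χ u (χ s(u, v)) = 3 ∧ colorDegree G χ v (χ s(u, v)) = 1

theorem colorDegree_eq_one (huv : G.Adj u v)
    (h : ∀ w, G.Adj u w → χ s(u, w) = χ s(u, v) → w = v) : colorDegree G χ u (χ s(u, v)) = 1 :=
  Set.ncard_eq_one.2 ⟨v, by grind⟩

theorem colorDegree_eq_two (huv : G.Adj u v) (huw : G.Adj u w) (hvw : v ≠ w)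
    (hχ : χ s(u, v) = χ s(u, w)) (h : ∀ x, G.Adj u x → χ s(u, x) = χ s(u, v) → x = v ∨ x = w) :
    colorDegree G χ u (χ s(u, v)) = 2 :=
  Set.ncard_eq_two.2 ⟨v, w, hvw, by grind⟩

theorem Dominates.of_outer (hclaw : ClawFree G) (hv : (outerGraph G).Adj u v)
    (hw : (outerGraph G).Adj u w) (h : Dominates G χ u v) : Dominates G χ u w := by
  obtain rfl | hvw := eq_or_ne v w
  · exact h
  have hnbr {x : V} (hx : G.Adj u x) := eq_or_eq_of_outer_of_outer hclaw hv hw hvw hx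
  by_cases hχ : χ s(u, w) = χ s(u, v)
  · exact .inl (colorDegree_eq_two hw.1 hv.1 hvw.symm hχ fun x hx _ ↦ (hnbr hx).symm)
  · have hone : colorDegree G χ u (χ s(u, v)) = 1 := colorDegree_eq_one hv.1 (by grind)
    simp [Dominates, hone] at h

theorem colorDegree_eq_one_of_isTriangleBlock (hclaw : ClawFree G) (h : IsTriangleBlock G a b c)
    (ha : ∀ w, (outerGraph G).Adj a w → ¬ Dominates G χ a w) (hχ : χ s(a, b) ≠ χ s(a, c)) :
    colorDegree G χ a (χ s(a, b)) = 1 := by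
  refine colorDegree_eq_one h.inner.1 fun w haw hw ↦ ?_
  by_contra hwb
  have hout : (outerGraph G).Adj a w := ⟨haw, by grind [h.1 w]⟩
  refine ha w hout (.inl (colorDegree_eq_two haw h.inner.1 hwb hw fun x hax hx ↦ ?_))
  rcases inner_or_outer hax with hin | hout'
  · grind [h.1 x]
  · exact .inl (outer_unique hclaw h.inner hout' hout)

variable [Finite V]

theorem colorDegree_pos (huv : G.Adj u v) : 0 < colorDegree G χ u (χ s(u, v)) :=
  (Set.ncard_pos).2 ⟨v, huv, rfl⟩

theorem colorDegree_le (hdeg : MaxDegreeLE G 3) (u : V) (i : α) : colorDegree G χ u i ≤ 3 :=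
  (Set.ncard_le_ncard fun _ h ↦ h.1).trans (hdeg u)

theorem dominates_iff_not (hdeg : MaxDegreeLE G 3)
    (hχ : ∀ u v, G.Adj u v → colorDegree G χ u (χ s(u, v)) ≠ colorDegree G χ v (χ s(u, v)))
    (huv : G.Adj u v) : Dominates G χ u v ↔ ¬ Dominates G χ v u := by
  have := hχ u v huv
  have := colorDegree_pos (χ := χ) huv
  have := colorDegree_pos (χ := χ) huv.symm
  have := colorDegree_le (χ := χ) hdeg u (χ s(u, v))
  have := colorDegree_le (χ := χ) hdeg v (χ s(u, v))
  simp only [Dominates, Sym2.eq_swap (a := v)] at *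
  omega

theorem two_le_colorDegree (huv : G.Adj u v) (huw : G.Adj u w) (hvw : v ≠ w)
    (hχ : χ s(u, v) = χ s(u, w)) : 2 ≤ colorDegree G χ u (χ s(u, v)) := by
  rw [← Set.ncard_pair hvw]
  refine Set.ncard_le_ncard ?_
  rintro _ (rfl | rfl)
  exacts [⟨huv, rfl⟩, ⟨huw, hχ.symm⟩]

theorem exists_dominates_of_isTriangleBlock (hdeg : MaxDegreeLE G 3) (hclaw : ClawFree G)
    (hχ : ∀ u v, G.Adj u v → colorDegree G χ u (χ s(u, v)) ≠ colorDegree G χ v (χ s(u, v)))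
    (h : IsTriangleBlock G a b c) :
    ∃ v ∈ ({a, b, c} : Set V), ∃ w, (outerGraph G).Adj v w ∧ Dominates G χ v w := by
  by_contra! hnot
  have repeated {a b c : V} (h : IsTriangleBlock G a b c)
      (ha : ∀ w, (outerGraph G).Adj a w → ¬ Dominates G χ a w)
      (hb : ∀ w, (outerGraph G).Adj b w → ¬ Dominates G χ b w) :
      χ s(a, b) = χ s(c, a) ∨ χ s(a, b) = χ s(b, c) := by
    by_contra! ⟨hne, hne'⟩
    have hda := colorDegree_eq_one_of_isTriangleBlock hclaw h ha (Sym2.eq_swap (a := c) ▸ hne)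
    have hdb := colorDegree_eq_one_of_isTriangleBlock hclaw h.rotate.swap hb
      (Sym2.eq_swap (a := a) ▸ hne')
    exact hχ a b h.inner.1 (hda.trans (Sym2.eq_swap (a := b) ▸ hdb.symm))
  have ha := hnot a (by simp)
  have hb := hnot b (by simp)
  have hc := hnot c (by simp)
  have hab := repeated h ha hb
  have hbc := repeated h.rotate hb hc
  have hca := repeated h.rotate.rotate hc ha
  have hda := two_le_colorDegree (χ := χ) h.inner.1 h.swap.inner.1 h.rotate.ne (by grind)
  have hdb := two_le_colorDegree (χ := χ) h.rotate.inner.1 h.inner.1.symm h.rotate.rotate.ne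
    (by grind)
  have hdc := two_le_colorDegree (χ := χ) h.rotate.rotate.inner.1 h.rotate.inner.1.symm h.ne
    (by grind)
  have := hχ a b h.inner.1
  have := hχ b c h.rotate.inner.1
  have := hχ c a h.rotate.rotate.inner.1
  have := colorDegree_le (χ := χ) hdeg a (χ s(a, b))
  have := colorDegree_le (χ := χ) hdeg b (χ s(b, c))
  have := colorDegree_le (χ := χ) hdeg c (χ s(c, a))
  grind

theorem exists_isSourceSet (hdeg : MaxDegreeLE G 3) (hclaw : ClawFree G) (hdec : Decomposable G) :
    ∃ S, IsSourceSet G S := by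
  obtain ⟨k, hk⟩ := hdec
  obtain ⟨χ, hχ⟩ := hasLIEC_iff.1 hk
  have mem_iff {u v : V} (huv : (outerGraph G).Adj u v) :
      (∃ w, (outerGraph G).Adj u w ∧ Dominates G χ u w) ↔ Dominates G χ u v :=
    ⟨fun ⟨_, huw, h⟩ ↦ h.of_outer hclaw huw huv, fun h ↦ ⟨v, huv, h⟩⟩
  refine ⟨{u | ∃ v, (outerGraph G).Adj u v ∧ Dominates G χ u v}, ?_, fun u ⟨v, huv, _⟩ ↦ ⟨v, huv⟩,
    ?_, fun a b c h ↦ ?_⟩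
  · intro u v huv
    simpa only [Set.mem_ofPred, mem_iff huv, mem_iff huv.symm] using
      dominates_iff_not hdeg hχ huv.1
  · rintro u ⟨w, huw, h⟩ v
    by_contra! hleaf
    have hone : colorDegree G χ u (χ s(u, w)) = 1 :=
      colorDegree_eq_one huw.1 fun x hx _ ↦ (hleaf x hx).trans (hleaf w huw.1).symm
    simp [Dominates, hone] at h
  · simpa using exists_dominates_of_isTriangleBlock hdeg hclaw hχ h

end Sources

section Strength

variable {V : Type*} {G : SimpleGraph V} {S : Set V} {κ : V → Fin 3} {a b c t : V}

/-- The prescribed color degree at a source, in the color of its outer edges: weak sources have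
degree 2 and strong ones degree 3. -/
def level (strong : Bool) : ℕ := if strong then 3 else 2

theorem level_ne_one (s : Bool) : level s ≠ 1 := by
  cases s <;> decide

/-- Once every source `v` has been assigned the color `κ v` of its outer edges, its color degree in
`κ v` is prescribed: 2, or 3 if `v` is *strong*. Here `strong` is required to be a choice for which
the triangle blocks can be colored. -/
structure IsStrength (G : SimpleGraph V) (S : Set V) (κ : V → Fin 3) (strong : V → Bool) :
    Prop where
  exists_triangle : ∀ ⦃a⦄, strong a → ∃ b c, IsTriangleBlock G a b c ∧ b ∈ S
  free : ∀ ⦃a b c⦄, IsTriangleBlock G a b c → a ∈ S → b ∈ S → c ∉ S →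
    (∀ t, (outerGraph G).Adj c t → κ t ∉ ({κ a, κ b} : Set _)) → strong a ≠ strong b
  relay : ∀ ⦃a b c t⦄, IsTriangleBlock G a b c → a ∈ S → b ∈ S → c ∉ S →
    (outerGraph G).Adj c t → κ t = κ a → strong a = strong t
  relay_other : ∀ ⦃a b c t⦄, IsTriangleBlock G a b c → a ∈ S → b ∈ S → c ∉ S →
    (outerGraph G).Adj c t → κ t = κ a → κ b ≠ κ a → strong b = false
  single : ∀ ⦃a b c⦄, IsTriangleBlock G a b c → a ∈ S → b ∈ S → c ∈ S →
    κ a ∉ ({κ b, κ c} : Set _) → strong a = false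
  repeated : ∀ ⦃a b c⦄, IsTriangleBlock G a b c → a ∈ S → b ∈ S → c ∈ S →
    κ a = κ b → κ a ≠ κ c → strong a ≠ strong b

/-- The least solution of the requirements of `IsStrength`; ties between two sources are broken by
the order on the vertices. -/
inductive IsStrong [LT V] (G : SimpleGraph V) (S : Set V) (κ : V → Fin 3) : V → Prop
  | free {a b c : V} : IsTriangleBlock G a b c → a ∈ S → b ∈ S → c ∉ S →
      (∀ t, (outerGraph G).Adj c t → κ t ∉ ({κ a, κ b} : Set _)) → b < a → IsStrong G S κ a
  | relay {a b c t : V} : IsTriangleBlock G a b c → a ∈ S → b ∈ S → c ∉ S →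
      (outerGraph G).Adj c t → κ t = κ a → IsStrong G S κ t → IsStrong G S κ a
  | repeated {a b c : V} : IsTriangleBlock G a b c → a ∈ S → b ∈ S → c ∈ S →
      κ a = κ b → b < a → IsStrong G S κ a

theorem IsStrong.exists_triangle [LT V] (h : IsStrong G S κ a) :
    ∃ b c, IsTriangleBlock G a b c ∧ b ∈ S := by
  cases h
  all_goals exact ⟨_, _, ‹_›, ‹_›⟩

theorem isStrong_iff_of_two_sources [LT V] (h : IsTriangleBlock G a b c) (ha : a ∈ S) (hb : b ∈ S)
    (hc : c ∉ S) : IsStrong G S κ a ↔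
      ((∀ t, (outerGraph G).Adj c t → κ t ∉ ({κ a, κ b} : Set _)) ∧ b < a) ∨
        ∃ t, (outerGraph G).Adj c t ∧ κ t = κ a ∧ IsStrong G S κ t := by
  constructor
  · rintro (⟨h', -, hb', -, hfree, hlt⟩ | ⟨h', -, hb', -, hout, hκ, hstrong⟩ |
      ⟨h', -, hb', hc', -, -⟩)
    all_goals obtain ⟨rfl, rfl⟩ | ⟨rfl, rfl⟩ := h.eq_or_eq h'
    any_goals contradiction
    exacts [.inl ⟨hfree, hlt⟩, .inr ⟨_, hout, hκ, hstrong⟩]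
  · rintro (⟨hfree, hlt⟩ | ⟨t, hout, hκ, hstrong⟩)
    exacts [.free h ha hb hc hfree hlt, .relay h ha hb hc hout hκ hstrong]

theorem isStrong_iff_of_three_sources [LT V] (h : IsTriangleBlock G a b c) (ha : a ∈ S) (hb : b ∈ S)
    (hc : c ∈ S) : IsStrong G S κ a ↔ κ a = κ b ∧ b < a ∨ κ a = κ c ∧ c < a := by
  constructor
  · rintro (⟨h', -, -, hc', -, -⟩ | ⟨h', -, -, hc', -, -, -⟩ | ⟨h', -, -, -, hκ, hlt⟩)
    all_goals obtain ⟨rfl, rfl⟩ | ⟨rfl, rfl⟩ := h.eq_or_eq h'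
    any_goals contradiction
    exacts [.inl ⟨hκ, hlt⟩, .inr ⟨hκ, hlt⟩]
  · rintro (⟨hκ, hlt⟩ | ⟨hκ, hlt⟩)
    exacts [.repeated h ha hb hc hκ hlt, .repeated h.swap ha hc hb hκ hlt]

open Classical in
theorem exists_isStrength (hclaw : ClawFree G) (S : Set V) (κ : V → Fin 3) :
    ∃ strong, IsStrength G S κ strong := by
  obtain ⟨_, -⟩ := exists_wellFoundedLT V
  refine ⟨fun v ↦ decide (IsStrong G S κ v), ?_⟩
  have lt_iff {a b c : V} (h : IsTriangleBlock G a b c) : a < b ↔ ¬ b < a := by grind [h.ne]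
  constructor
  case exists_triangle => exact fun a ha ↦ (of_decide_eq_true ha).exists_triangle
  case free =>
    intro a b c h ha hb hc hfree
    simp only [ne_eq, decide_eq_decide, isStrong_iff_of_two_sources h ha hb hc,
      isStrong_iff_of_two_sources h.rotate.swap hb ha hc]
    grind [lt_iff h]
  case relay =>
    intro a b c t h ha hb hc ht hκ
    have hunique {u : V} (hu : (outerGraph G).Adj c u) : u = t :=
      outer_unique hclaw h.rotate.rotate.inner hu ht
    simp only [decide_eq_decide, isStrong_iff_of_two_sources h ha hb hc]
    grind
  case relay_other =>
    intro a b c t h ha hb hc ht hκ hne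
    have hunique {u : V} (hu : (outerGraph G).Adj c u) : u = t :=
      outer_unique hclaw h.rotate.rotate.inner hu ht
    simp only [decide_eq_false_iff_not, isStrong_iff_of_two_sources h.rotate.swap hb ha hc]
    grind
  case single =>
    intro a b c h ha hb hc hκ
    simp only [decide_eq_false_iff_not, isStrong_iff_of_three_sources h ha hb hc]
    grind
  case repeated =>
    intro a b c h ha hb hc hab hac
    simp only [ne_eq, decide_eq_decide, isStrong_iff_of_three_sources h ha hb hc,
      isStrong_iff_of_three_sources h.rotate.swap hb ha hc]
    grind [lt_iff h]

end Strength

section Gluing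

variable {V : Type*} {G : SimpleGraph V} {S : Set V} {κ : V → Fin 3} {strong : V → Bool}
  {c c' : Sym2 V → Fin 3} {u v : V}

/-- Every outer edge has the color assigned to its source. -/
def Extends (G : SimpleGraph V) (S : Set V) (κ : V → Fin 3) (c : Sym2 V → Fin 3) : Prop :=
  ∀ ⦃u v⦄, (outerGraph G).Adj u v → u ∈ S → c s(u, v) = κ u

/-- The color degrees of `c` at `v` differ from those at the neighbors of `v` along inner edges, and
meet the requirements of the outer edges: a source attains its prescribed degree and a sink avoids
it. -/
structure IsGoodAt (G : SimpleGraph V) (S : Set V) (κ : V → Fin 3) (strong : V → Bool)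
    (c : Sym2 V → Fin 3) (v : V) : Prop where
  inner : ∀ u, (innerGraph G).Adj v u →
    colorDegree G c v (c s(v, u)) ≠ colorDegree G c u (c s(v, u))
  source : v ∈ S → colorDegree G c v (κ v) = level (strong v)
  sink : ∀ u, (outerGraph G).Adj v u → u ∈ S → colorDegree G c v (κ u) ≠ level (strong u)

/-- The inner edges of the block `B` can be colored compatibly with the colors of the outer edges
and the prescribed degrees. -/
def IsColorable (G : SimpleGraph V) (S : Set V) (κ : V → Fin 3) (strong : V → Bool)
    (B : (innerGraph G).ConnectedComponent) : Prop :=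
  ∃ c, Extends G S κ c ∧ ∀ v ∈ B.supp, IsGoodAt G S κ strong c v

theorem Extends.eq_of_outer (hS : IsSourceSet G S) (hc : Extends G S κ c) (hc' : Extends G S κ c')
    (huv : (outerGraph G).Adj u v) : c s(u, v) = c' s(u, v) := by
  by_cases hu : u ∈ S
  · rw [hc huv hu, hc' huv hu]
  · have hv : v ∈ S := (hS.mem_iff huv.symm).2 hu
    rw [Sym2.eq_swap, hc huv.symm hv, hc' huv.symm hv]

theorem exists_extends (hS : IsSourceSet G S) (κ : V → Fin 3) (L : V → V → Fin 3)
    (hL : ∀ u v, L u v = L v u) :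
    ∃ c, Extends G S κ c ∧ ∀ u v, (innerGraph G).Adj u v → c s(u, v) = L u v := by
  classical
  obtain ⟨c, hc⟩ := exists_sym2_eq (G := G)
    (fun u v ↦ if (innerGraph G).Adj u v then L u v else if u ∈ S then κ u else κ v) (by
      intro u v huv
      rcases inner_or_outer huv with h | h
      · simp only [h, h.symm, if_true, hL]
      · grind [hS.mem_iff h, h.2, (innerGraph G).adj_comm u v])
  exact ⟨c, fun u v h hu ↦ by rw [hc u v h.1, if_neg h.2, if_pos hu],
    fun u v h ↦ by rw [hc u v h.1, if_pos h]⟩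

theorem hasLIEC_of_forall_isColorable (hS : IsSourceSet G S)
    (h : ∀ B, IsColorable G S κ strong B) : HasLIEC G 3 := by
  choose c hext hgood using h
  let blk := (innerGraph G).connectedComponentMk
  obtain ⟨d, hd⟩ := exists_sym2_eq (G := G) (fun u v ↦ c (blk u) s(u, v)) (by
    intro u v huv
    rcases inner_or_outer huv with h | h
    · rw [show blk u = blk v from SimpleGraph.ConnectedComponent.sound h.reachable, Sym2.eq_swap]
    · rw [Sym2.eq_swap (a := v), (hext _).eq_of_outer hS (hext _) h])
  have hdegree (v : V) (i : Fin 3) : colorDegree G d v i = colorDegree G (c (blk v)) v i := by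
    unfold colorDegree
    congr 1
    ext w
    exact and_congr_right fun hw ↦ by rw [hd v w hw]
  have hout {u v : V} (huv : (outerGraph G).Adj u v) (hu : u ∈ S) :
      colorDegree G d u (d s(u, v)) ≠ colorDegree G d v (d s(u, v)) := by
    rw [hdegree, hdegree, hd u v huv.1, hext _ huv hu, (hgood _ u rfl).source hu]
    exact ((hgood _ v rfl).sink u huv.symm hu).symm
  refine hasLIEC_iff.2 ⟨d, fun u v huv ↦ ?_⟩
  rcases inner_or_outer huv with h | h
  · have hblk : blk v = blk u := SimpleGraph.ConnectedComponent.sound h.symm.reachable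
    rw [hdegree, hdegree, hd u v huv, hblk]
    exact (hgood _ u rfl).inner v h
  · by_cases hu : u ∈ S
    · exact hout h hu
    · rw [Sym2.eq_swap]
      exact (hout h.symm ((hS.mem_iff h.symm).2 hu)).symm

theorem isColorable_of_reachable (hS : IsSourceSet G S) (L : V → V → Fin 3)
    (hL : ∀ u v, L u v = L v u) (hgood : ∀ c, Extends G S κ c →
      (∀ u v, (innerGraph G).Adj u v → c s(u, v) = L u v) →
        ∀ w, (innerGraph G).Reachable v w → IsGoodAt G S κ strong c w) :
    IsColorable G S κ strong ((innerGraph G).connectedComponentMk v) := by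
  obtain ⟨c, hc, hcL⟩ := exists_extends hS κ L hL
  exact ⟨c, hc, fun w hw ↦
    hgood c hc hcL w (SimpleGraph.ConnectedComponent.exact hw).symm⟩

end Gluing

section SingletonBlocks

variable {V : Type*} {G : SimpleGraph V} {S : Set V} {κ : V → Fin 3} {strong : V → Bool} {v : V}

theorem isColorable_of_isolated (hS : IsSourceSet G S) (hv : ∀ w, ¬ (innerGraph G).Adj v w)
    (hgood : ∀ c, Extends G S κ c → IsGoodAt G S κ strong c v) :
    IsColorable G S κ strong ((innerGraph G).connectedComponentMk v) := by
  refine isColorable_of_reachable hS 0 (fun _ _ ↦ rfl) fun c hc _ w hw ↦ ?_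
  have hwv : w ∈ ({v} : Set V) := mem_of_reachable (by rintro _ x rfl hx; exact absurd hx (hv x))
    rfl hw
  exact hwv ▸ hgood c hc

theorem isColorable_of_isolated_source (hclaw : ClawFree G) (hS : IsSourceSet G S)
    (hstrong : IsStrength G S κ strong) (hv : ∀ w, ¬ (innerGraph G).Adj v w) (hvS : v ∈ S) :
    IsColorable G S κ strong ((innerGraph G).connectedComponentMk v) := by
  have hout {w : V} (hw : G.Adj v w) : (outerGraph G).Adj v w := ⟨hw, hv w⟩
  obtain ⟨s, hs⟩ := hS.exists_outer hvS
  obtain ⟨t, ht, hts⟩ := hS.exists_adj_ne hvS s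
  have hweak : strong v = false := by
    by_contra h
    obtain ⟨b, c, hbc, -⟩ := hstrong.exists_triangle (by simpa using h)
    exact hv b hbc.inner
  refine isColorable_of_isolated hS hv fun c hc ↦ ⟨fun u hu ↦ absurd hu (hv u), fun _ ↦ ?_,
    fun u hu huS ↦ absurd huS ((hS.mem_iff hu).1 hvS)⟩
  have hcs := hc hs hvS
  rw [hweak, ← hcs]
  exact colorDegree_eq_two hs.1 ht hts.symm (hcs.trans (hc (hout ht) hvS).symm) fun x hx _ ↦
    eq_or_eq_of_outer_of_outer hclaw hs (hout ht) hts.symm hx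

theorem isColorable_of_isolated_sink (hS : IsSourceSet G S) (hv : ∀ w, ¬ (innerGraph G).Adj v w)
    (hvS : v ∉ S) (hκ : Set.InjOn κ (G.neighborSet v)) :
    IsColorable G S κ strong ((innerGraph G).connectedComponentMk v) := by
  refine isColorable_of_isolated hS hv fun c hc ↦ ⟨fun u hu ↦ absurd hu (hv u),
    fun h ↦ absurd h hvS, fun u hu _ ↦ ?_⟩
  have hcκ {w : V} (hw : G.Adj v w) : c s(v, w) = κ w := by
    have hout : (outerGraph G).Adj v w := ⟨hw, hv w⟩
    rw [Sym2.eq_swap, hc hout.symm ((hS.mem_iff hout.symm).2 hvS)]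
  rw [← hcκ hu.1, colorDegree_eq_one hu.1 fun w hw h ↦
    hκ hw hu.1 (by rwa [← hcκ hw, ← hcκ hu.1])]
  exact (level_ne_one _).symm

end SingletonBlocks

section LocalSolutions

open Finset

/-- The outer edge, if any, at a vertex of a block that has an inner edge, together with the
requirement that it imposes on the color degree of that vertex: at a source the degree in the color
`i` of the edge has to be `level strong`; at a sink it has to differ from the level of the source at
the other end. -/
inductive Port
  | closed
  | source (i : Fin 3) (strong : Bool)
  | sink (i : Fin 3) (strong : Bool)
  deriving DecidableEq, Fintype

/-- The contribution of a port to the color degrees of its vertex. -/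
def Port.degree : Port → Fin 3 → ℕ
  | closed, _ => 0
  | source i _, k | sink i _, k => if i = k then 1 else 0

/-- The requirement that a port imposes on the color degrees `d` of its vertex. -/
def Port.Accepts : Port → (Fin 3 → ℕ) → Prop
  | closed, _ => True
  | source i s, d => d i = level s
  | sink i s, d => d i ≠ level s

instance : (p : Port) → (d : Fin 3 → ℕ) → Decidable (p.Accepts d)
  | .closed, _ => inferInstanceAs (Decidable True)
  | .source i s, d => inferInstanceAs (Decidable (d i = level s))
  | .sink i s, d => inferInstanceAs (Decidable (d i ≠ level s))

variable {J : Type*} [Fintype J]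

/-- The degree of `i` in the color `k` when the edges of the block `H` are colored by `l` and the
outer edges are described by the ports `p`. -/
def localDegree (H : SimpleGraph J) [DecidableRel H.Adj] (p : J → Port) (l : Matrix J J (Fin 3))
    (i : J) (k : Fin 3) : ℕ :=
  #{j | H.Adj i j ∧ l i j = k} + (p i).degree k

/-- An edge-coloring of the block `H` (the values of `l` off the edges are irrelevant) that is
locally irregular on `H` and meets the requirements of the ports. -/
def IsLocalSolution (H : SimpleGraph J) [DecidableRel H.Adj] (p : J → Port)
    (l : Matrix J J (Fin 3)) : Prop :=
  l.IsSymm ∧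
  (∀ i j, H.Adj i j → localDegree H p l i (l i j) ≠ localDegree H p l j (l i j)) ∧
  ∀ i, (p i).Accepts (localDegree H p l i)

instance (H : SimpleGraph J) [DecidableRel H.Adj] (p : J → Port) (l : Matrix J J (Fin 3)) :
    Decidable (IsLocalSolution H p l) :=
  inferInstanceAs (Decidable (l.transpose = l ∧ _ ∧ _))

/-- The coloring of the triangle on `0, 1, 2` with colors `x` on `01`, `y` on `12`, `z` on `02`. -/
def triangleColoring (x y z : Fin 3) : Matrix (Fin 3) (Fin 3) (Fin 3) :=
  !![0, x, z; x, 0, y; z, y, 0]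

/-- The coloring of the diamond with color `x` on `01`, `y` on `02` and `12`, `z` on `13` and `w` on
`23`. -/
def diamondColoring (x y z w : Fin 3) : Matrix (Fin 4) (Fin 4) (Fin 3) :=
  !![0, x, y, 0; x, 0, y, z; y, y, 0, w; 0, z, w, 0]

/-- The block `H` with ports `p` can be colored. -/
def IsSolvable (H : SimpleGraph J) [DecidableRel H.Adj] (p : J → Port) : Prop :=
  ∃ l, IsLocalSolution H p l

theorem isSolvable_source_closed (i : Fin 3) (P : Port) (hP : ∀ j s, P ≠ .source j s) :
    IsSolvable ⊤ ![.source i false, .closed, P] := by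
  have key : ∀ (i : Fin 3) (P : Port), (∀ j s, P ≠ .source j s) → ∃ x y z,
      IsLocalSolution ⊤ ![.source i false, .closed, P] (triangleColoring x y z) := by
    decide +kernel
  obtain ⟨_, _, _, h⟩ := key i P hP
  exact ⟨_, h⟩

theorem isSolvable_source_sink_sink (i j k : Fin 3) (s t : Bool) (h : #{i, j, k} = 2) :
    IsSolvable ⊤ ![.source i false, .sink j s, .sink k t] := by
  have key : ∀ (i j k : Fin 3) (s t : Bool), #{i, j, k} = 2 → ∃ x y z,
      IsLocalSolution ⊤ ![.source i false, .sink j s, .sink k t] (triangleColoring x y z) := by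
    decide +kernel
  obtain ⟨_, _, _, h⟩ := key i j k s t h
  exact ⟨_, h⟩

theorem isSolvable_source_source_closed {i j : Fin 3} (h : i ≠ j) :
    IsSolvable ⊤ ![.source i true, .source j false, .closed] :=
  ⟨triangleColoring i j i, by decide +revert⟩

theorem isSolvable_source_source_sink {i j k : Fin 3} (s : Bool) (h : i ≠ j)
    (hk : k ∉ ({i, j} : Set _)) : IsSolvable ⊤ ![.source i true, .source j false, .sink k s] :=
  ⟨triangleColoring i j i, by decide +revert⟩

theorem isSolvable_source_source_sink_same {i j : Fin 3} (s : Bool) (h : i ≠ j) :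
    IsSolvable ⊤ ![.source i s, .source j false, .sink i s] := by
  have key : ∀ (i j : Fin 3) (s : Bool), i ≠ j → ∃ x y,
      IsLocalSolution ⊤ ![.source i s, .source j false, .sink i s] (triangleColoring x y i) := by
    decide
  obtain ⟨_, _, h⟩ := key i j s h
  exact ⟨_, h⟩

theorem isSolvable_source_source_source {i k : Fin 3} (h : i ≠ k) :
    IsSolvable ⊤ ![.source i true, .source i false, .source k false] :=
  ⟨triangleColoring i k i, by decide +revert⟩

theorem isSolvable_diamond (P Q : Port) (hP : ∀ i, P ≠ .source i true)
    (hQ : ∀ i, Q ≠ .source i true) : IsSolvable diamondGraph ![P, .closed, .closed, Q] := by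
  have key : ∀ P Q : Port, (∀ i, P ≠ .source i true) → (∀ i, Q ≠ .source i true) → ∃ x y z w,
      IsLocalSolution diamondGraph ![P, .closed, .closed, Q] (diamondColoring x y z w) := by
    decide +kernel
  obtain ⟨_, _, _, _, h⟩ := key P Q hP hQ
  exact ⟨_, h⟩

theorem isSolvable_completeGraph : IsSolvable (⊤ : SimpleGraph (Fin 4)) fun _ ↦ .closed :=
  ⟨!![0, 0, 0, 2; 0, 0, 1, 1; 0, 1, 0, 2; 2, 1, 2, 0], by decide⟩

end LocalSolutions

section PortsOfBlocks

open Finset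

variable {V J : Type*} {G : SimpleGraph V} {S : Set V} {κ : V → Fin 3} {strong : V → Bool}
  {c : Sym2 V → Fin 3} {v x : V} {P : Port}

/-- `P` describes the outer edge, if any, at the vertex `v`. -/
inductive IsPort (G : SimpleGraph V) (S : Set V) (κ : V → Fin 3) (strong : V → Bool) (v : V) :
    Port → Prop
  | closed : (∀ w, ¬ (outerGraph G).Adj v w) → IsPort G S κ strong v .closed
  | source (t : V) : (∀ w, (outerGraph G).Adj v w ↔ w = t) → v ∈ S →
      IsPort G S κ strong v (.source (κ v) (strong v))
  | sink (t : V) : (∀ w, (outerGraph G).Adj v w ↔ w = t) → v ∉ S →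
      IsPort G S κ strong v (.sink (κ t) (strong t))

theorem outer_adj_iff (hclaw : ClawFree G) (hx : (innerGraph G).Adj v x) {t : V}
    (ht : (outerGraph G).Adj v t) (w : V) : (outerGraph G).Adj v w ↔ w = t :=
  ⟨fun hw ↦ outer_unique hclaw hx hw ht, fun h ↦ h ▸ ht⟩

theorem isPort_source (hclaw : ClawFree G) (hS : IsSourceSet G S) (hx : (innerGraph G).Adj v x)
    (hv : v ∈ S) : IsPort G S κ strong v (.source (κ v) (strong v)) :=
  let ⟨t, ht⟩ := hS.exists_outer hv
  .source t (outer_adj_iff hclaw hx ht) hv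

theorem isPort_sink (hclaw : ClawFree G) (hx : (innerGraph G).Adj v x) (hv : v ∉ S) {t : V}
    (ht : (outerGraph G).Adj v t) : IsPort G S κ strong v (.sink (κ t) (strong t)) :=
  .sink t (outer_adj_iff hclaw hx ht) hv

theorem IsPort.ncard_eq (hS : IsSourceSet G S) (hc : Extends G S κ c)
    (h : IsPort G S κ strong v P) (k : Fin 3) :
    {w | (outerGraph G).Adj v w ∧ c s(v, w) = k}.ncard = P.degree k := by
  cases h with
  | closed h => simp [h, Port.degree]
  | source t h hv =>
    have hcκ : c s(v, t) = κ v := hc ((h t).2 rfl) hv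
    by_cases hk : κ v = k <;> simp [h, Port.degree, hcκ, hk, Set.ofPred_and]
  | sink t h hv =>
    have hcκ : c s(v, t) = κ t := by
      rw [Sym2.eq_swap, hc ((h t).2 rfl).symm ((hS.mem_iff ((h t).2 rfl).symm).2 hv)]
    by_cases hk : κ t = k <;> simp [h, Port.degree, hcκ, hk, Set.ofPred_and]

theorem IsPort.source_eq (hS : IsSourceSet G S) (h : IsPort G S κ strong v P) (hv : v ∈ S) :
    P = .source (κ v) (strong v) := by
  cases h with
  | closed h => exact absurd (hS.exists_outer hv) (by simpa using h)
  | source => rfl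
  | sink _ _ h => contradiction

theorem IsPort.sink_eq (hS : IsSourceSet G S) (h : IsPort G S κ strong v P) {u : V}
    (hu : (outerGraph G).Adj v u) (huS : u ∈ S) : P = .sink (κ u) (strong u) := by
  cases h with
  | closed h => exact absurd hu (h u)
  | source _ _ h => exact absurd huS ((hS.mem_iff hu).1 h)
  | sink t h => rw [(h u).1 hu]

variable [Fintype J] {H : SimpleGraph J} [DecidableRel H.Adj] {ι : J → V} {p : J → Port}
  {l : Matrix J J (Fin 3)}

theorem IsBlock.colorDegree_eq [Finite V] (hB : IsBlock G H ι) (hS : IsSourceSet G S)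
    (hc : Extends G S κ c) (hcl : ∀ i j, H.Adj i j → c s(ι i, ι j) = l i j) {i : J}
    (hp : IsPort G S κ strong (ι i) (p i)) (k : Fin 3) :
    colorDegree G c (ι i) k = localDegree H p l i k := by
  have hsplit : {w | G.Adj (ι i) w ∧ c s(ι i, w) = k} =
      ι '' {j | H.Adj i j ∧ l i j = k} ∪ {w | (outerGraph G).Adj (ι i) w ∧ c s(ι i, w) = k} := by
    ext w
    constructor
    · rintro ⟨hw, hk⟩
      rcases inner_or_outer hw with h | h
      · obtain ⟨j, hj, rfl⟩ := (hB.adj_iff i w).1 h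
        exact .inl ⟨j, ⟨hj, hcl i j hj ▸ hk⟩, rfl⟩
      · exact .inr ⟨h, hk⟩
    · rintro (⟨j, ⟨hj, hk⟩, rfl⟩ | ⟨h, hk⟩)
      · exact ⟨((hB.adj_iff i (ι j)).2 ⟨j, hj, rfl⟩).1, (hcl i j hj).trans hk⟩
      · exact ⟨h.1, hk⟩
  have hdisj : Disjoint (ι '' {j | H.Adj i j ∧ l i j = k})
      {w | (outerGraph G).Adj (ι i) w ∧ c s(ι i, w) = k} := by
    rw [Set.disjoint_left]
    rintro _ ⟨j, ⟨hj, -⟩, rfl⟩ ⟨h, -⟩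
    exact h.2 ((hB.adj_iff i (ι j)).2 ⟨j, hj, rfl⟩)
  rw [colorDegree, hsplit, Set.ncard_union_eq hdisj, hp.ncard_eq hS hc,
    Set.ncard_image_of_injective _ hB.injective, localDegree, ← Set.ncard_coe_finset,
    Finset.coe_filter_univ]

theorem IsBlock.isGoodAt [Finite V] (hB : IsBlock G H ι) (hS : IsSourceSet G S)
    (hp : ∀ i, IsPort G S κ strong (ι i) (p i)) (hl : IsLocalSolution H p l)
    (hc : Extends G S κ c) (hcl : ∀ i j, H.Adj i j → c s(ι i, ι j) = l i j) (i : J) :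
    IsGoodAt G S κ strong c (ι i) := by
  have hdegree (i : J) : colorDegree G c (ι i) = localDegree H p l i :=
    funext (hB.colorDegree_eq hS hc hcl (hp i))
  obtain ⟨-, hirr, hport⟩ := hl
  refine ⟨fun u hu ↦ ?_, fun hi ↦ ?_, fun u hu huS ↦ ?_⟩
  · obtain ⟨j, hj, rfl⟩ := (hB.adj_iff i u).1 hu
    rw [hdegree, hdegree, hcl i j hj]
    exact hirr i j hj
  · have := hport i
    rw [(hp i).source_eq hS hi] at this
    rw [hdegree]
    exact this
  · have := hport i
    rw [(hp i).sink_eq hS hu huS] at this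
    rw [hdegree]
    exact this

theorem IsBlock.isColorable [Finite V] (hB : IsBlock G H ι) (hS : IsSourceSet G S)
    (hp : ∀ i, IsPort G S κ strong (ι i) (p i)) (h : IsSolvable H p) (i : J) :
    IsColorable G S κ strong ((innerGraph G).connectedComponentMk (ι i)) := by
  obtain ⟨l, hl⟩ := h
  have : Nonempty J := ⟨i⟩
  let inv := Function.invFun ι
  have hinv (j : J) : inv (ι j) = j := Function.leftInverse_invFun hB.injective j
  refine isColorable_of_reachable hS (fun u v ↦ l (inv u) (inv v)) (fun u v ↦ hl.1.apply _ _)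
    fun c hc hcl w hw ↦ ?_
  obtain ⟨j, rfl⟩ := hB.exists_eq_of_reachable hw
  refine hB.isGoodAt hS hp hl hc (fun i j hij ↦ ?_) j
  rw [hcl _ _ ((hB.adj_iff i (ι j)).2 ⟨j, hij, rfl⟩), hinv, hinv]

end PortsOfBlocks

section ColorableBlocks

variable {V : Type*} {G : SimpleGraph V} {S : Set V} {κ : V → Fin 3} {strong : V → Bool}
  {a b c t p m n q : V} {P Q R : Port}

theorem IsTriangleBlock.component_eq (h : IsTriangleBlock G a b c) :
    (innerGraph G).connectedComponentMk b = (innerGraph G).connectedComponentMk a :=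
  SimpleGraph.ConnectedComponent.sound h.inner.symm.reachable

theorem exists_isPort_of_weak (hclaw : ClawFree G) (hS : IsSourceSet G S)
    (ha : (innerGraph G).Adj a b) (hweak : strong a = false) :
    ∃ P, IsPort G S κ strong a P ∧ ∀ i, P ≠ .source i true := by
  by_cases haS : a ∈ S
  · exact ⟨_, isPort_source hclaw hS ha haS, by simp [hweak]⟩
  by_cases ht : ∃ t, (outerGraph G).Adj a t
  · obtain ⟨t, ht⟩ := ht
    exact ⟨_, isPort_sink hclaw ha haS ht, by simp⟩
  · exact ⟨_, .closed (not_exists.1 ht), by simp⟩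

theorem IsDiamond.not_isTriangleBlock (h : IsDiamond G p m n q) : ¬ IsTriangleBlock G p b c := by
  intro h'
  have hpm := (h'.1 m).1 ⟨h.1, n, h.2, h.3⟩
  have hpn := (h'.1 n).1 ⟨h.2, m, h.1, h.3.symm⟩
  have hmq : (innerGraph G).Adj m q := ⟨h.4.symm, n, h.3, h.5⟩
  have := h.3.ne
  have := h.5.ne
  have := h.6
  rcases hpm with rfl | rfl
  · have := (h'.2 q).1 hmq
    grind
  · have := (h'.3 q).1 hmq
    grind

theorem IsDiamond.strong_eq_false (h : IsDiamond G p m n q) (hstrong : IsStrength G S κ strong) :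
    strong p = false := by
  by_contra hp
  obtain ⟨b, c, hbc, -⟩ := hstrong.exists_triangle (by simpa using hp)
  exact h.not_isTriangleBlock hbc

variable [Finite V]

theorem IsTriangleBlock.isColorable (h : IsTriangleBlock G a b c) (hS : IsSourceSet G S)
    (hP : IsPort G S κ strong a P) (hQ : IsPort G S κ strong b Q) (hR : IsPort G S κ strong c R)
    (hsol : IsSolvable ⊤ ![P, Q, R]) :
    IsColorable G S κ strong ((innerGraph G).connectedComponentMk a) :=
  h.isBlock.isColorable hS (by simpa [Fin.forall_fin_succ] using ⟨hP, hQ, hR⟩) hsol 0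

theorem isColorable_one_source (hclaw : ClawFree G) (hS : IsSourceSet G S)
    (hstrong : IsStrength G S κ strong) (h : IsTriangleBlock G a b c) (ha : a ∈ S) (hb : b ∉ S)
    (hc : c ∉ S) (hκ : ∀ s t, (outerGraph G).Adj b s → (outerGraph G).Adj c t →
      ({κ a, κ s, κ t} : Finset (Fin 3)).card = 2) :
    IsColorable G S κ strong ((innerGraph G).connectedComponentMk a) := by
  have hPa := isPort_source (κ := κ) (strong := strong) hclaw hS h.inner ha
  have hweak : strong a = false := by
    by_contra hne
    obtain ⟨b', c', h', hb'⟩ := hstrong.exists_triangle (by simpa using hne)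
    grind [h.eq_or_eq h']
  rw [hweak] at hPa
  by_cases hs : ∃ s, (outerGraph G).Adj b s <;> by_cases ht : ∃ t, (outerGraph G).Adj c t
  · obtain ⟨⟨s, hs⟩, t, ht⟩ := hs, ht
    exact h.isColorable hS hPa (isPort_sink hclaw h.rotate.inner hb hs)
      (isPort_sink hclaw h.swap.rotate.inner hc ht)
      (isSolvable_source_sink_sink _ _ _ _ _ (hκ s t hs ht))
  · obtain ⟨s, hs⟩ := hs
    exact h.swap.isColorable hS hPa (.closed (not_exists.1 ht))
      (isPort_sink hclaw h.rotate.inner hb hs) (isSolvable_source_closed _ _ (by simp))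
  · obtain ⟨t, ht⟩ := ht
    exact h.isColorable hS hPa (.closed (not_exists.1 hs))
      (isPort_sink hclaw h.swap.rotate.inner hc ht) (isSolvable_source_closed _ _ (by simp))
  · exact h.isColorable hS hPa (.closed (not_exists.1 hs)) (.closed (not_exists.1 ht))
      (isSolvable_source_closed _ _ (by simp))

theorem isColorable_two_sources_free (hclaw : ClawFree G) (hS : IsSourceSet G S)
    (h : IsTriangleBlock G a b c) (ha : a ∈ S) (hb : b ∈ S) (hc : c ∉ S)
    (hfree : ∀ t, (outerGraph G).Adj c t → κ t ∉ ({κ a, κ b} : Set _)) (hκ : κ a ≠ κ b)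
    (hsa : strong a = true) (hsb : strong b = false) :
    IsColorable G S κ strong ((innerGraph G).connectedComponentMk a) := by
  have hPa := isPort_source (κ := κ) (strong := strong) hclaw hS h.inner ha
  have hPb := isPort_source (κ := κ) (strong := strong) hclaw hS h.rotate.inner hb
  rw [hsa] at hPa
  rw [hsb] at hPb
  by_cases ht : ∃ t, (outerGraph G).Adj c t
  · obtain ⟨t, ht⟩ := ht
    exact h.isColorable hS hPa hPb (isPort_sink hclaw h.rotate.rotate.inner hc ht)
      (isSolvable_source_source_sink _ hκ (hfree t ht))
  · exact h.isColorable hS hPa hPb (.closed (not_exists.1 ht))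
      (isSolvable_source_source_closed hκ)

theorem isColorable_two_sources_relay (hclaw : ClawFree G) (hS : IsSourceSet G S)
    (hstrong : IsStrength G S κ strong) (h : IsTriangleBlock G a b c) (ha : a ∈ S) (hb : b ∈ S)
    (hc : c ∉ S) (ht : (outerGraph G).Adj c t) (htκ : κ t = κ a) (hκ : κ a ≠ κ b) :
    IsColorable G S κ strong ((innerGraph G).connectedComponentMk a) := by
  have hPa := isPort_source (κ := κ) (strong := strong) hclaw hS h.inner ha
  have hPb := isPort_source (κ := κ) (strong := strong) hclaw hS h.rotate.inner hb
  have hPc := isPort_sink (κ := κ) (strong := strong) hclaw h.rotate.rotate.inner hc ht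
  rw [hstrong.relay_other h ha hb hc ht htκ hκ.symm] at hPb
  rw [htκ, ← hstrong.relay h ha hb hc ht htκ] at hPc
  exact h.isColorable hS hPa hPb hPc (isSolvable_source_source_sink_same _ hκ)

theorem isColorable_two_sources (hclaw : ClawFree G) (hS : IsSourceSet G S)
    (hstrong : IsStrength G S κ strong) (h : IsTriangleBlock G a b c) (ha : a ∈ S) (hb : b ∈ S)
    (hc : c ∉ S) (hκ : κ a ≠ κ b) :
    IsColorable G S κ strong ((innerGraph G).connectedComponentMk a) := by
  have h' : IsTriangleBlock G b a c := h.rotate.swap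
  by_cases hfree : ∀ t, (outerGraph G).Adj c t → κ t ∉ ({κ a, κ b} : Set _)
  · have hne := hstrong.free h ha hb hc hfree
    cases hsa : strong a
    · rw [← h.component_eq]
      exact isColorable_two_sources_free hclaw hS h' hb ha hc (Set.pair_comm (κ a) _ ▸ hfree)
        hκ.symm (by simpa [hsa] using hne) hsa
    · exact isColorable_two_sources_free hclaw hS h ha hb hc hfree hκ hsa (by simpa [hsa] using hne)
  · push Not at hfree
    obtain ⟨t, ht, htκ | htκ⟩ := hfree
    · exact isColorable_two_sources_relay hclaw hS hstrong h ha hb hc ht htκ hκ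
    · rw [← h.component_eq]
      exact isColorable_two_sources_relay hclaw hS hstrong h' hb ha hc ht htκ hκ.symm

theorem isColorable_three_sources_repeated (hclaw : ClawFree G) (hS : IsSourceSet G S)
    (hstrong : IsStrength G S κ strong) (h : IsTriangleBlock G a b c) (ha : a ∈ S) (hb : b ∈ S)
    (hc : c ∈ S) (hab : κ a = κ b) (hac : κ a ≠ κ c) :
    IsColorable G S κ strong ((innerGraph G).connectedComponentMk a) := by
  have hPa := isPort_source (κ := κ) (strong := strong) hclaw hS h.inner ha
  have hPb := isPort_source (κ := κ) (strong := strong) hclaw hS h.rotate.inner hb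
  have hPc := isPort_source (κ := κ) (strong := strong) hclaw hS h.rotate.rotate.inner hc
  rw [hstrong.single h.rotate.rotate hc ha hb (by grind)] at hPc
  have hne := hstrong.repeated h ha hb hc hab hac
  rw [← hab] at hPb
  cases hsa : strong a
  · rw [hsa] at hPa
    rw [show strong b = true by simpa [hsa] using hne] at hPb
    rw [← h.component_eq]
    exact h.rotate.swap.isColorable hS hPb hPa hPc (isSolvable_source_source_source hac)
  · rw [hsa] at hPa
    rw [show strong b = false by simpa [hsa] using hne] at hPb
    exact h.isColorable hS hPa hPb hPc (isSolvable_source_source_source hac)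

theorem isColorable_three_sources (hclaw : ClawFree G) (hS : IsSourceSet G S)
    (hstrong : IsStrength G S κ strong) (h : IsTriangleBlock G a b c) (ha : a ∈ S) (hb : b ∈ S)
    (hc : c ∈ S) (hκ : ({κ a, κ b, κ c} : Finset (Fin 3)).card = 2) :
    IsColorable G S κ strong ((innerGraph G).connectedComponentMk a) := by
  by_cases hab : κ a = κ b
  · exact isColorable_three_sources_repeated hclaw hS hstrong h ha hb hc hab
      fun hac ↦ by simp [← hab, ← hac] at hκ
  by_cases hac : κ a = κ c
  · exact isColorable_three_sources_repeated hclaw hS hstrong h.swap ha hc hb hac hab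
  have hbc : κ b = κ c := by
    by_contra hbc
    simp [Finset.card_eq_three.2 ⟨_, _, _, hab, hac, hbc, rfl⟩] at hκ
  rw [← h.component_eq]
  exact isColorable_three_sources_repeated hclaw hS hstrong h.rotate hb hc ha hbc (Ne.symm hab)

theorem IsDiamond.isPort_center (hdeg : MaxDegreeLE G 3) (h : IsDiamond G p m n q) :
    IsPort G S κ strong m .closed :=
  .closed fun _ hw ↦ hw.2 ((h.inner_center_iff hdeg).2 (h.adj_center hdeg hw.1))

theorem isColorable_diamond (hdeg : MaxDegreeLE G 3) (hclaw : ClawFree G) (hS : IsSourceSet G S)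
    (hstrong : IsStrength G S κ strong) (h : IsDiamond G p m n q) (i : Fin 4) :
    IsColorable G S κ strong ((innerGraph G).connectedComponentMk (![p, m, n, q] i)) := by
  have hm := h.isPort_center (S := S) (κ := κ) (strong := strong) hdeg
  have hn := h.swap_centers.isPort_center (S := S) (κ := κ) (strong := strong) hdeg
  by_cases hpq : G.Adj p q
  · have h' := h.exchange hpq
    have hp := h'.isPort_center (S := S) (κ := κ) (strong := strong) hdeg
    have hq := h'.swap_centers.isPort_center (S := S) (κ := κ) (strong := strong) hdeg
    exact (h.isBlock_completeGraph hdeg hpq).isColorable hS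
      (by simpa [Fin.forall_fin_succ] using ⟨hp, hm, hn, hq⟩) isSolvable_completeGraph i
  · obtain ⟨P, hp, hP⟩ := exists_isPort_of_weak (κ := κ) hclaw hS
      ((h.inner_tip_iff hdeg hpq).2 (.inl rfl)) (h.strong_eq_false hstrong)
    obtain ⟨Q, hq, hQ⟩ := exists_isPort_of_weak (κ := κ) hclaw hS
      ((h.swap_tips.inner_tip_iff hdeg (mt .symm hpq)).2 (.inl rfl))
      (h.swap_tips.strong_eq_false hstrong)
    exact (h.isBlock hdeg hpq).isColorable hS
      (by simpa [Fin.forall_fin_succ] using ⟨hp, hm, hn, hq⟩) (isSolvable_diamond P Q hP hQ) i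

end ColorableBlocks

section TwoColoredHyperedges

open Finset Function

variable {V β : Type*} {v : V}

theorem exists_forall_card_insert_eq_two (s : Finset (Fin 3)) (hne : s.Nonempty) (hs : #s ≤ 2) :
    ∃ x, ∀ y ≠ x, #(insert y s) = 2 := by
  decide +revert

theorem exists_forall_card_image_update_eq_two [DecidableEq V] {e : Finset V} (κ : V → Fin 3)
    (hv : v ∈ e) (he : #e ≤ 3) :
    ∃ x, ∀ y ≠ x, 1 < #e → #(e.image (update κ v y)) = 2 := by
  rcases (e.erase v).eq_empty_or_nonempty with hempty | hne
  · have := card_erase_add_one hv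
    exact ⟨0, fun _ _ h ↦ absurd h (by simp_all)⟩
  obtain ⟨x, hx⟩ := exists_forall_card_insert_eq_two _ (hne.image κ)
    (card_image_le.trans (by rw [card_erase_of_mem hv]; omega))
  refine ⟨x, fun y hy _ ↦ ?_⟩
  rw [← insert_erase hv, image_insert, update_self, ← hx y hy]
  congr 2
  exact image_congr fun w hw ↦ update_of_ne (ne_of_mem_erase hw) y κ

theorem exists_forall_card_image_eq_two [Finite V] [Finite β] (e : β → Finset V)
    (he : ∀ B, #(e B) ≤ 3) (hv : ∀ v, {B | v ∈ e B}.ncard ≤ 2) :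
    ∃ κ : V → Fin 3, ∀ B, 1 < #(e B) → #((e B).image κ) = 2 := by
  classical
  let bad (κ : V → Fin 3) : Set β := {B | 1 < #(e B) ∧ #((e B).image κ) ≠ 2}
  obtain ⟨κ, hκ⟩ := Finite.exists_min fun κ ↦ (bad κ).ncard
  refine ⟨κ, fun B hB ↦ ?_⟩
  by_contra hbad
  obtain ⟨v, hvB⟩ := card_pos.1 (zero_lt_one.trans hB)
  choose! x hx using fun C (hC : v ∈ e C) ↦ exists_forall_card_image_update_eq_two κ hC (he C)
  obtain ⟨y, hy⟩ : ∃ y, y ∉ x '' {C | v ∈ e C} := by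
    by_contra! hall
    have hle := (Set.ncard_image_le (f := x) (Set.toFinite {C | v ∈ e C})).trans (hv v)
    rw [Set.eq_univ_of_forall hall, Set.ncard_univ, Nat.card_fin] at hle
    omega
  have hnew {C : β} (hC : v ∈ e C) : 1 < #(e C) → #((e C).image (update κ v y)) = 2 :=
    hx C hC y fun h ↦ hy ⟨C, hC, h.symm⟩
  have hsub : bad (update κ v y) ⊂ bad κ := by
    refine ⟨fun C hC ↦ ?_, fun h ↦ (h ⟨hB, hbad⟩).2 (hnew hvB hB)⟩
    have hvC : v ∉ e C := fun hvC ↦ hC.2 (hnew hvC hC.1)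
    have hcongr : (e C).image (update κ v y) = (e C).image κ :=
      image_congr fun w hw ↦ update_of_ne (ne_of_mem_of_not_mem hw hvC) y κ
    exact ⟨hC.1, hcongr ▸ hC.2⟩
  exact (Set.ncard_lt_ncard hsub).not_ge (hκ _)

end TwoColoredHyperedges

section Controls

open Finset

variable {V : Type*} {G : SimpleGraph V} {S : Set V} {a b c v : V}

/-- A set `e` of vertices adjacent to the block `B` controls it if `B` is colorable whenever exactly
two colors appear on `e`; when `e` has at most one element, `B` has to be always colorable. -/
structure Controls (G : SimpleGraph V) (S : Set V) (e : Finset V)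
    (B : (innerGraph G).ConnectedComponent) : Prop where
  card_le : #e ≤ 3
  mem_image : ∀ v ∈ e, B ∈ (innerGraph G).connectedComponentMk '' G.neighborSet v
  isColorable : ∀ ⦃κ strong⦄, IsStrength G S κ strong → (1 < #e → #(e.image κ) = 2) →
    IsColorable G S κ strong B

theorem ncard_image_neighborSet_le (hclaw : ClawFree G) (v : V) :
    ((innerGraph G).connectedComponentMk '' G.neighborSet v).ncard ≤ 2 := by
  let blk := (innerGraph G).connectedComponentMk
  suffices h : ∃ B C, ∀ w, G.Adj v w → blk w = B ∨ blk w = C by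
    obtain ⟨B, C, h⟩ := h
    have hsub : blk '' G.neighborSet v ⊆ {B, C} := by
      rintro _ ⟨w, hw, rfl⟩
      exact h w hw
    calc
      (blk '' G.neighborSet v).ncard ≤ ({B, C} : Set _).ncard := Set.ncard_le_ncard hsub
      _ ≤ ({C} : Set _).ncard + 1 := Set.ncard_insert_le B {C}
      _ = 2 := by rw [Set.ncard_singleton]
  have hblk {w : V} (hw : (innerGraph G).Adj v w) : blk w = blk v :=
    SimpleGraph.ConnectedComponent.sound hw.symm.reachable
  by_cases hs : ∃ s, (outerGraph G).Adj v s
  · obtain ⟨s, hs⟩ := hs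
    by_cases ht : ∃ t, (outerGraph G).Adj v t ∧ s ≠ t
    · obtain ⟨t, ht, hst⟩ := ht
      exact ⟨blk s, blk t, fun w hw ↦
        (eq_or_eq_of_outer_of_outer hclaw hs ht hst hw).imp (congrArg blk) (congrArg blk)⟩
    · push Not at ht
      exact ⟨blk v, blk s, fun w hw ↦
        (inner_or_outer hw).imp hblk fun hw ↦ (congrArg blk (ht w hw)).symm⟩
  · push Not at hs
    exact ⟨blk v, blk v, fun w hw ↦ .inl (hblk ((inner_or_outer hw).resolve_right (hs w)))⟩

theorem controls_empty {B : (innerGraph G).ConnectedComponent}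
    (h : ∀ ⦃κ strong⦄, IsStrength G S κ strong → IsColorable G S κ strong B) :
    Controls G S ∅ B :=
  ⟨by simp, by simp, fun _ _ hstrong _ ↦ h hstrong⟩

theorem exists_controls_of_isolated (hclaw : ClawFree G) (hS : IsSourceSet G S)
    (hv : ∀ w, ¬ (innerGraph G).Adj v w) :
    ∃ e, Controls G S e ((innerGraph G).connectedComponentMk v) := by
  classical
  by_cases hvS : v ∈ S
  · exact ⟨∅, controls_empty fun _ _ hstrong ↦
      isColorable_of_isolated_source hclaw hS hstrong hv hvS⟩
  rcases (G.neighborSet v).subsingleton_or_nontrivial with h | ⟨s, hs, t, ht, hst⟩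
  · exact ⟨∅, controls_empty fun κ _ _ ↦ isColorable_of_isolated_sink hS hv hvS (h.injOn κ)⟩
  refine ⟨{s, t}, card_le_two.trans (by simp), ?_, fun κ _ _ hκ ↦
    isColorable_of_isolated_sink hS hv hvS ?_⟩
  · simp only [mem_insert, mem_singleton]
    rintro _ (rfl | rfl)
    exacts [⟨v, hs.symm, rfl⟩, ⟨v, ht.symm, rfl⟩]
  · have hne : κ s ≠ κ t := by
      intro h
      simp [card_pair hst, h] at hκ
    have hnbr {w : V} (hw : G.Adj v w) : w = s ∨ w = t :=
      eq_or_eq_of_outer_of_outer hclaw ⟨hs, hv s⟩ ⟨ht, hv t⟩ hst hw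
    intro x hx y hy
    grind [hnbr hx, hnbr hy]

variable [Finite V]

theorem exists_controls_one_source (hclaw : ClawFree G) (hS : IsSourceSet G S)
    (h : IsTriangleBlock G a b c) (ha : a ∈ S) (hb : b ∉ S) (hc : c ∉ S) :
    ∃ e, Controls G S e ((innerGraph G).connectedComponentMk a) := by
  classical
  by_cases hst : ∃ s t, (outerGraph G).Adj b s ∧ (outerGraph G).Adj c t
  · obtain ⟨s, t, hs, ht⟩ := hst
    have has : a ≠ s := fun has ↦ hs.2 (has ▸ h.inner.symm)
    refine ⟨{a, s, t}, card_le_three, ?_, fun κ _ hstrong hκ ↦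
      isColorable_one_source hclaw hS hstrong h ha hb hc fun s' t' hs' ht' ↦ ?_⟩
    · simp only [mem_insert, mem_singleton]
      rintro _ (rfl | rfl | rfl)
      exacts [⟨b, h.inner.1, h.component_eq⟩, ⟨b, hs.1.symm, h.component_eq⟩,
        ⟨c, ht.1.symm, h.swap.component_eq⟩]
    · rw [outer_unique hclaw h.rotate.inner hs' hs, outer_unique hclaw h.swap.rotate.inner ht' ht]
      simpa [image_insert] using hκ (one_lt_card.2 ⟨a, by simp, s, by simp, has⟩)
  · exact ⟨∅, controls_empty fun _ _ hstrong ↦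
      isColorable_one_source hclaw hS hstrong h ha hb hc fun s t hs ht ↦ absurd ⟨s, t, hs, ht⟩ hst⟩

theorem exists_controls_two_sources (hclaw : ClawFree G) (hS : IsSourceSet G S)
    (h : IsTriangleBlock G a b c) (ha : a ∈ S) (hb : b ∈ S) (hc : c ∉ S) :
    ∃ e, Controls G S e ((innerGraph G).connectedComponentMk a) := by
  classical
  refine ⟨{a, b}, card_le_two.trans (by simp), ?_, fun κ _ hstrong hκ ↦
    isColorable_two_sources hclaw hS hstrong h ha hb hc fun hab ↦ ?_⟩
  · simp only [mem_insert, mem_singleton]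
    rintro _ (rfl | rfl)
    exacts [⟨b, h.inner.1, h.component_eq⟩, ⟨_, h.inner.1.symm, rfl⟩]
  · simp [card_pair h.ne, hab] at hκ

theorem exists_controls_three_sources (hclaw : ClawFree G) (hS : IsSourceSet G S)
    (h : IsTriangleBlock G a b c) (ha : a ∈ S) (hb : b ∈ S) (hc : c ∈ S) :
    ∃ e, Controls G S e ((innerGraph G).connectedComponentMk a) := by
  classical
  refine ⟨{a, b, c}, card_le_three, ?_, fun κ _ hstrong hκ ↦
    isColorable_three_sources hclaw hS hstrong h ha hb hc ?_⟩
  · simp only [mem_insert, mem_singleton]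
    rintro _ (rfl | rfl | rfl)
    exacts [⟨b, h.inner.1, h.component_eq⟩, ⟨_, h.inner.1.symm, rfl⟩,
      ⟨_, h.swap.inner.1.symm, rfl⟩]
  · simpa [image_insert] using hκ (one_lt_card.2 ⟨a, by simp, b, by simp, h.ne⟩)

theorem exists_controls_of_mem (hclaw : ClawFree G) (hS : IsSourceSet G S)
    (h : IsTriangleBlock G a b c) (ha : a ∈ S) :
    ∃ e, Controls G S e ((innerGraph G).connectedComponentMk a) := by
  by_cases hb : b ∈ S <;> by_cases hc : c ∈ S
  · exact exists_controls_three_sources hclaw hS h ha hb hc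
  · exact exists_controls_two_sources hclaw hS h ha hb hc
  · exact exists_controls_two_sources hclaw hS h.swap ha hc hb
  · exact exists_controls_one_source hclaw hS h ha hb hc

theorem exists_controls_of_isTriangleBlock (hclaw : ClawFree G) (hS : IsSourceSet G S)
    (h : IsTriangleBlock G a b c) :
    ∃ e, Controls G S e ((innerGraph G).connectedComponentMk a) := by
  rcases hS.triangle h with ha | hb | hc
  · exact exists_controls_of_mem hclaw hS h ha
  · exact h.component_eq ▸ exists_controls_of_mem hclaw hS h.rotate hb
  · exact h.swap.component_eq ▸ exists_controls_of_mem hclaw hS h.rotate.rotate hc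

theorem exists_controls (hdeg : MaxDegreeLE G 3) (hclaw : ClawFree G) (hS : IsSourceSet G S)
    (B : (innerGraph G).ConnectedComponent) : ∃ e, Controls G S e B := by
  obtain ⟨v, rfl⟩ := B.exists_rep
  rcases block_cases hdeg v with h | ⟨b, c, h⟩ | ⟨p, m, n, q, h, rfl | rfl⟩
  · exact exists_controls_of_isolated hclaw hS h
  · exact exists_controls_of_isTriangleBlock hclaw hS h
  · exact ⟨∅, controls_empty fun _ _ hstrong ↦ isColorable_diamond hdeg hclaw hS hstrong h 0⟩
  · exact ⟨∅, controls_empty fun _ _ hstrong ↦ isColorable_diamond hdeg hclaw hS hstrong h 1⟩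

end Controls

end LIEC

open LIEC

/-- Every decomposable claw-free graph with maximum degree 3 admits a locally irregular
edge-coloring with at most 3 colors. -/
theorem claw_free_subcubic_LIEC {V : Type*} [Fintype V] (G : SimpleGraph V)
    (hdec : Decomposable G) (hclaw : ClawFree G) (hdeg : MaxDegreeLE G 3) :
    HasLIEC G 3 := by
  obtain ⟨S, hS⟩ := exists_isSourceSet hdeg hclaw hdec
  choose e he using exists_controls hdeg hclaw hS
  have hinc (v : V) : {B | v ∈ e B}.ncard ≤ 2 :=
    (Set.ncard_le_ncard fun B hB ↦ (he B).mem_image v hB).trans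
      (ncard_image_neighborSet_le hclaw v)
  obtain ⟨κ, hκ⟩ := exists_forall_card_image_eq_two e (fun B ↦ (he B).card_le) hinc
  obtain ⟨strong, hstrong⟩ := exists_isStrength hclaw S κ
  exact hasLIEC_of_forall_isColorable hS fun B ↦ (he B).isColorable hstrong (hκ B)
end

section
/- Every ring permutation graph G satisfies χ'_irr(G) ≤ 3, i.e., G admits a locally irregular edge-coloring using at most 3 colors. -/
/-- The ring permutation graph `P_φ(C_n, R)` : a cycle `C_n` (on `ZMod n`), a disjoint
graph `R` on `n` vertices, and the perfect matching `{ v φ(v) : v ∈ V(C_n) }`. -/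
def ringPermGraph (n : ℕ) {W : Type*} (R : SimpleGraph W) (φ : ZMod n ≃ W) :
    SimpleGraph (ZMod n ⊕ W) :=
  SimpleGraph.fromRel (fun x y =>
    match x, y with
    | Sum.inl i, Sum.inl j => i - j = 1
    | Sum.inl i, Sum.inr w => φ i = w
    | Sum.inr a, Sum.inr b => R.Adj a b
    | Sum.inr _, Sum.inl _ => False)

/-!
Choose a maximal independent set of `R`, the *hubs*, and inside its complement a maximal
independent set; what is left over are the *tails*.  Removing the hubs from the 2-regular graph `R`
leaves isolated vertices (*lone*) and single edges joining a *head* to a tail.  Give color `0` to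
all edges of `R` except the head–tail edges, to the matching edges at hubs and tails, and to no
other matching edge; a head–tail edge receives the color of the matching edge at its head.  Inside
`R` this coloring is locally irregular, whatever nonzero colors the remaining matching edges get,
and every vertex of `R` only forbids its partner on the cycle one degree in one color.

To color the cycle, walk once around it, starting at a hub that is followed by a head or a lone
vertex, and record the color of the last edge and the degree in that color of the vertex just
passed.  Making the first edge color `0` lets the walk close up as soon as its last recorded degree
is not `1`.  A walk along which all recorded degrees are forced has recorded degree `1` exactly
when it has passed an odd number of vertices that are not heads.  Orienting the edges of `R` from
hubs to non-hubs and from heads to tails and counting out-degrees shows that the total number of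
such vertices is even.
-/

section ColorDegree

variable {V C : Type*}

/-- The number of neighbors of `u` joined to it by an edge of color `c`, for a coloring of the edges
of `G` presented as a function `f` of the ordered pairs of vertices. -/
noncomputable def colorDegree (G : SimpleGraph V) (f : V → V → C) (u : V) (c : C) : ℕ :=
  {v | G.Adj u v ∧ f u v = c}.ncard

theorem colorDegree_eq_count [DecidableEq C] {G : SimpleGraph V} (f : V → V → C) {u : V}
    {l : List V} (hl : l.Nodup) (hadj : ∀ v, G.Adj u v ↔ v ∈ l) (c : C) :
    colorDegree G f u c = (l.map (f u)).count c := by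
  classical
  have hset : {v | G.Adj u v ∧ f u v = c} = ((l.filter (f u · = c)).toFinset : Set V) := by
    ext v
    simp [hadj]
  rw [colorDegree, hset, Set.ncard_coe_finset, List.toFinset_card_of_nodup (hl.filter _),
    List.count, List.countP_map, List.countP_eq_length_filter]
  rfl

theorem hasLIEC_of_colorDegree_ne {G : SimpleGraph V} {k : ℕ} (f : V → V → Fin k)
    (hsymm : ∀ u v, f u v = f v u)
    (hne : ∀ u v, G.Adj u v → colorDegree G f u (f u v) ≠ colorDegree G f v (f u v)) :
    HasLIEC G k := by
  refine ⟨Sym2.lift ⟨f, hsymm⟩, fun i u v huv => ?_⟩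
  have hneighbor : ∀ w, (SimpleGraph.fromEdgeSet
      {e | e ∈ G.edgeSet ∧ Sym2.lift ⟨f, hsymm⟩ e = i}).neighborSet w =
      {x | G.Adj w x ∧ f w x = i} := by
    intro w
    ext x
    simpa using fun h _ => h.ne
  obtain ⟨hadj, rfl⟩ : G.Adj u v ∧ f u v = i := by simpa using huv.1
  rw [hneighbor, hneighbor]
  exact hne u v hadj

end ColorDegree

section Graph

variable {V : Type*} (G : SimpleGraph V)

theorem sum_neighborFinset_comm {M : Type*} [AddCommMonoid M] [Fintype V] [DecidableRel G.Adj]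
    (F : V → V → M) :
    ∑ u, ∑ v ∈ G.neighborFinset u, F u v = ∑ u, ∑ v ∈ G.neighborFinset u, F v u :=
  Finset.sum_comm' fun u v => by simp [G.adj_comm]

theorem exists_maximal_isIndepSet_within [Finite V] {I U : Set V} (hIU : I ⊆ U)
    (hI : G.IsIndepSet I) :
    ∃ J, I ⊆ J ∧ Maximal (fun J => J ⊆ U ∧ G.IsIndepSet J) J :=
  Finite.exists_le_maximal (p := fun J : Set V => J ⊆ U ∧ G.IsIndepSet J) ⟨hIU, hI⟩

variable {G}

theorem exists_adj_of_maximal_isIndepSet_within {J U : Set V}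
    (hJ : Maximal (fun J => J ⊆ U ∧ G.IsIndepSet J) J) {w : V} (hwU : w ∈ U) (hwJ : w ∉ J) :
    ∃ v ∈ J, G.Adj w v := by
  by_contra! hnot
  refine hwJ (hJ.mem_of_prop_insert ⟨Set.insert_subset hwU hJ.prop.1, ?_⟩)
  exact hJ.prop.2.insert fun v hv _ => ⟨hnot v hv, fun h => hnot v hv h.symm⟩

theorem exists_eq_pair_of_adj {w v : V} (hw : (G.neighborSet w).ncard = 2) (hv : G.Adj w v) :
    ∃ u, v ≠ u ∧ G.neighborSet w = {v, u} := by
  obtain ⟨a, b, hab, hN⟩ := Set.ncard_eq_two.1 hw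
  have hv' : v ∈ ({a, b} : Set V) := hN ▸ hv
  rcases hv' with rfl | rfl
  · exact ⟨b, hab, hN⟩
  · exact ⟨a, hab.symm, hN.trans (Set.pair_comm _ _)⟩

end Graph

section ZMod

variable {n : ℕ} [NeZero n]

theorem exists_and_not_add_one {P : ZMod n → Prop} {a b : ZMod n} (ha : P a) (hb : ¬ P b) :
    ∃ i, P i ∧ ¬ P (i + 1) := by
  by_contra! hstep
  have hall : ∀ k : ℕ, P (a + k) := by
    intro k
    induction k with
    | zero => simpa using ha
    | succ k ih => simpa [add_assoc] using hstep _ ih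
  exact hb (by simpa using hall (b - a).val)

theorem card_filter_eq_count (i₀ : ZMod n) (P : ZMod n → Prop) [DecidablePred P] :
    (Finset.univ.filter P).card = Nat.count (fun k => P (i₀ + k)) n := by
  rw [Nat.count_eq_card_filter_range]
  refine Finset.card_nbij' (fun i => (i - i₀).val) (fun k => i₀ + k) ?_ ?_ ?_ ?_
  · intro i hi
    simpa [ZMod.val_lt] using hi
  · intro k hk
    simpa using (Finset.mem_filter.1 hk).2
  · intro i _
    simp
  · intro k hk
    simpa using ZMod.val_cast_of_lt (Finset.mem_range.1 (Finset.mem_filter.1 hk).1)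

end ZMod

section Reachable

variable {α : Type*}

/-- `Reachable r a k b`: some sequence of states leads from `a` to `b` in `k` steps, the `j`-th of
which (counting from `0`) is allowed by `r j`. -/
inductive Reachable (r : ℕ → α → α → Prop) (a : α) : ℕ → α → Prop
  | refl : Reachable r a 0 a
  | step {k : ℕ} {b c : α} : Reachable r a k b → r k b c → Reachable r a (k + 1) c

theorem Reachable.exists_seq {r : ℕ → α → α → Prop} {a b : α} {k : ℕ} (h : Reachable r a k b) :
    ∃ s : ℕ → α, s 0 = a ∧ s k = b ∧ ∀ j < k, r j (s j) (s (j + 1)) := by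
  induction h with
  | refl => exact ⟨fun _ => a, rfl, rfl, by simp⟩
  | @step k b c _ hr ih =>
    obtain ⟨s, hs0, hsk, hs⟩ := ih
    refine ⟨Function.update s (k + 1) c, by simpa using hs0, by simp, fun j hj => ?_⟩
    rcases Nat.lt_succ_iff_lt_or_eq.1 hj with hj | rfl
    · rw [Function.update_of_ne (by omega), Function.update_of_ne (by omega)]
      exact hs j hj
    · rw [Function.update_of_ne (by omega), Function.update_self, hsk]
      exact hr

theorem Reachable.exists_cyclic {n : ℕ} [NeZero n] {r : ZMod n → α → α → Prop} {a : α}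
    {i₀ : ZMod n} (h : Reachable (fun k => r (i₀ + (k + 1 : ℕ))) a n a) :
    ∃ f : ZMod n → α, ∀ i, r (i + 1) (f i) (f (i + 1)) := by
  obtain ⟨s, hs0, hsn, hs⟩ := h.exists_seq
  refine ⟨fun i => s (i - i₀).val, fun i => ?_⟩
  obtain ⟨m, hm, rfl⟩ : ∃ m < n, i = i₀ + (m : ℕ) := ⟨(i - i₀).val, ZMod.val_lt _, by simp⟩
  have hwrap : s ((m + 1) % n) = s (m + 1) := by
    rcases Nat.lt_or_eq_of_le (Nat.succ_le_of_lt hm) with h | h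
    · rw [Nat.mod_eq_of_lt h]
    · rw [show m + 1 = n from h, Nat.mod_self, hs0, hsn]
  have hlast : i₀ + m + 1 - i₀ = ((m + 1 : ℕ) : ZMod n) := by
    push_cast
    ring
  have hnext : i₀ + m + 1 = i₀ + ((m + 1 : ℕ) : ZMod n) := by
    push_cast
    ring
  simp only [hlast, add_sub_cancel_left, ZMod.val_natCast, hwrap, Nat.mod_eq_of_lt hm]
  rw [hnext]
  exact hs m hm

end Reachable

/-- The four roles of the vertices of `R`: `hub`s form a maximal independent set, a `lone` vertex
has two hub neighbors, and a `head` and a `tail` are the two ends of an edge without hubs. -/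
inductive Label
  | hub
  | lone
  | head
  | tail
  deriving DecidableEq

namespace Label

/-- The constraint on the labels of the two neighbors of a vertex labelled by the first argument. -/
def Fits : Label → Label → Label → Prop
  | hub, x, y => x ≠ hub ∧ y ≠ hub
  | lone, x, y => x = hub ∧ y = hub
  | head, x, y => x = hub ∧ y = tail
  | tail, x, y => x = hub ∧ y = head

/-- The labels of the vertices of `R` whose matching edge has color `0`. -/
def MatchedByZero (l : Label) : Prop :=
  l = hub ∨ l = tail

/-- The degree of a vertex of `R` in the color of its matching edge. -/
def matchDegree : Label → ℕ
  | hub => 3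
  | lone => 1
  | head => 2
  | tail => 2

/-- The color of an edge of `R` whose ends have labels `l` and `m` and matching edges of colors
`p` and `q`. -/
def edgeColor : (l m : Label) → (p q : Fin 3) → Fin 3
  | head, tail, p, _ => p
  | tail, head, _, q => q
  | _, _, _, _ => 0

@[simp]
theorem edgeColor_hub_left (m : Label) (p q : Fin 3) : edgeColor hub m p q = 0 := by
  cases m <;> rfl

theorem edgeColor_comm (l m : Label) (p q : Fin 3) : edgeColor l m p q = edgeColor m l q p := by
  cases l <;> cases m <;> rfl

section count

variable {l x y : Label} {p q r : Fin 3}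

theorem Fits.count_match (h : Fits l x y) (hp : p = 0 ↔ l.MatchedByZero)
    (hr : r = 0 ↔ y.MatchedByZero) :
    [p, edgeColor l x p q, edgeColor l y p r].count p = l.matchDegree := by
  cases l <;> cases x <;> cases y <;>
    simp_all [Fits, edgeColor, matchDegree, MatchedByZero, @eq_comm _ (0 : Fin 3)]

theorem Fits.count_zero_ne_three (h : Fits l x y) (hp : p = 0 ↔ l.MatchedByZero)
    (hr : r = 0 ↔ y.MatchedByZero) (hl : l ≠ hub) :
    [p, edgeColor l x p q, edgeColor l y p r].count 0 ≠ 3 := by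
  cases l <;> cases x <;> cases y <;>
    simp_all [Fits, edgeColor, MatchedByZero]

end count

/-- The orientation of the edges of `R`, as an indicator: `outflow l m` is `1` if an edge joining
labels `l` and `m` leaves its end labelled `l`, and `0` otherwise. -/
def outflow : Label → Label → ℕ
  | hub, lone => 1
  | hub, head => 1
  | hub, tail => 1
  | head, tail => 1
  | _, _ => 0

theorem Fits.outflow_add_inflow {l x y : Label} (h : Fits l x y) :
    (outflow l x + outflow l y) + (outflow x l + outflow y l) = 2 := by
  cases l <;> cases x <;> cases y <;> simp_all [Fits, outflow]

theorem Fits.outflow_add_indicator {l x y : Label} (h : Fits l x y) :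
    (outflow l x + outflow l y) + (if l ≠ head then 1 else 0) =
      1 + 2 * if l = hub then 1 else 0 := by
  cases l <;> cases x <;> cases y <;> simp_all [Fits, outflow]

end Label

open Label

section Labelling

variable {W : Type*} {R : SimpleGraph W} {L : W → Label}

/-- `R` is 2-regular and the labels of the neighbors of each vertex are as its own label demands. -/
def IsLabelling (R : SimpleGraph W) (L : W → Label) : Prop :=
  ∀ w, ∃ a b, a ≠ b ∧ R.neighborSet w = {a, b} ∧ Fits (L w) (L a) (L b)

theorem IsLabelling.even_card_ne_head [Fintype W] (hL : IsLabelling R L) :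
    Even (Finset.univ.filter (L · ≠ head)).card := by
  classical
  have hpair : ∀ w, ∃ a b, Fits (L w) (L a) (L b) ∧
      ∀ F : W → ℕ, ∑ v ∈ R.neighborFinset w, F v = F a + F b := by
    intro w
    obtain ⟨a, b, hab, hN, hfit⟩ := hL w
    have hN' : R.neighborFinset w = {a, b} := by
      ext v
      simpa using Set.ext_iff.1 hN v
    exact ⟨a, b, hfit, fun F => by rw [hN', Finset.sum_pair hab]⟩
  have hflow := sum_neighborFinset_comm R fun w v => outflow (L w) (L v)
  have htwo : ∑ w, (∑ v ∈ R.neighborFinset w, outflow (L w) (L v) +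
      ∑ v ∈ R.neighborFinset w, outflow (L v) (L w)) = ∑ _w : W, 2 := by
    refine Finset.sum_congr rfl fun w _ => ?_
    obtain ⟨a, b, hfit, hsum⟩ := hpair w
    rw [hsum, hsum, hfit.outflow_add_inflow]
  have hcount : ∑ w, (∑ v ∈ R.neighborFinset w, outflow (L w) (L v) +
      if L w ≠ head then 1 else 0) = ∑ w, (1 + 2 * if L w = hub then 1 else 0) := by
    refine Finset.sum_congr rfl fun w _ => ?_
    obtain ⟨a, b, hfit, hsum⟩ := hpair w
    rw [hsum, hfit.outflow_add_indicator]
  simp only [Finset.sum_add_distrib, ← Finset.mul_sum, ← Finset.card_filter, Finset.sum_const,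
    smul_eq_mul, mul_one] at htwo hcount
  exact ⟨(Finset.univ.filter (L · = hub)).card, by omega⟩

theorem IsLabelling.labels_of_adj (hL : IsLabelling R L) {w u : W} (hwu : R.Adj w u) :
    L w = hub ∧ L u ≠ hub ∨ L u = hub ∧ L w ≠ hub ∨
      L w = head ∧ L u = tail ∨ L u = head ∧ L w = tail := by
  obtain ⟨a, b, -, hN, hfit⟩ := hL w
  have hmem : u ∈ ({a, b} : Set W) := hN ▸ hwu
  rcases hmem with rfl | rfl <;> cases hw : L w <;> simp_all [Fits]

open Classical in
/-- The labels of the vertices of `R` when `S` is a maximal independent set and `T` a maximal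
independent set of `R` outside `S`. -/
noncomputable def labelOfIndepSets (R : SimpleGraph W) (S T : Set W) (w : W) : Label :=
  if w ∈ S then hub else if w ∉ T then tail else if ∃ v ∉ S, R.Adj w v then head else lone

section labelOfIndepSets

variable {S T : Set W}

@[simp]
theorem labelOfIndepSets_eq_hub {w : W} : labelOfIndepSets R S T w = hub ↔ w ∈ S := by
  unfold labelOfIndepSets
  split_ifs <;> simp_all

theorem labelOfIndepSets_of_mem {w : W} (hwS : w ∉ S) (hwT : w ∈ T) :
    labelOfIndepSets R S T w = lone ∨ labelOfIndepSets R S T w = head := by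
  unfold labelOfIndepSets
  split_ifs <;> simp_all

@[simp]
theorem labelOfIndepSets_eq_head {w : W} :
    labelOfIndepSets R S T w = head ↔ w ∉ S ∧ w ∈ T ∧ ∃ v ∉ S, R.Adj w v := by
  unfold labelOfIndepSets
  split_ifs <;> simp_all

@[simp]
theorem labelOfIndepSets_eq_tail {w : W} :
    labelOfIndepSets R S T w = tail ↔ w ∉ S ∧ w ∉ T := by
  unfold labelOfIndepSets
  split_ifs <;> simp_all

theorem isLabelling_labelOfIndepSets (hreg : ∀ w, (R.neighborSet w).ncard = 2)
    (hS : Maximal (fun S => S ⊆ Set.univ ∧ R.IsIndepSet S) S)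
    (hT : Maximal (fun T => T ⊆ Sᶜ ∧ R.IsIndepSet T) T) :
    IsLabelling R (labelOfIndepSets R S T) := by
  intro w
  by_cases hwS : w ∈ S
  · obtain ⟨a, b, hab, hN⟩ := Set.ncard_eq_two.1 (hreg w)
    have hnot : ∀ v ∈ R.neighborSet w, v ∉ S := fun v hv hvS => hS.prop.2 hwS hvS hv.ne hv
    have hw : labelOfIndepSets R S T w = hub := labelOfIndepSets_eq_hub.2 hwS
    refine ⟨a, b, hab, hN, ?_⟩
    simpa [hw, Fits] using And.intro (hnot a (by simp [hN])) (hnot b (by simp [hN]))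
  obtain ⟨a, haS, hwa⟩ := exists_adj_of_maximal_isIndepSet_within hS (Set.mem_univ w) hwS
  obtain ⟨b, hab, hN⟩ := exists_eq_pair_of_adj (hreg w) hwa
  have hadj : ∀ v, R.Adj w v ↔ v = a ∨ v = b := fun v => Set.ext_iff.1 hN v
  have hwb : R.Adj w b := (hadj b).2 (Or.inr rfl)
  refine ⟨a, b, hab, hN, ?_⟩
  by_cases hwT : w ∈ T
  · by_cases hbS : b ∈ S
    · have hnone : ∀ v ∉ S, ¬ R.Adj w v := by
        rintro v hvS hv
        rcases (hadj v).1 hv with rfl | rfl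
        exacts [hvS haS, hvS hbS]
      have hw : labelOfIndepSets R S T w = lone :=
        (labelOfIndepSets_of_mem hwS hwT).resolve_right (by simpa using fun _ _ => hnone)
      simp [hw, Fits, haS, hbS]
    · have hw : labelOfIndepSets R S T w = head := by simpa using ⟨hwS, hwT, b, hbS, hwb⟩
      have hbT : b ∉ T := fun hbT => hT.prop.2 hwT hbT hwb.ne hwb
      simp [hw, Fits, haS, hbS, hbT]
  · have hw : labelOfIndepSets R S T w = tail := labelOfIndepSets_eq_tail.2 ⟨hwS, hwT⟩
    obtain ⟨t, htT, hwt⟩ := exists_adj_of_maximal_isIndepSet_within hT hwS hwT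
    obtain rfl : t = b := ((hadj t).1 hwt).resolve_left fun hta => hT.prop.1 htT (hta ▸ haS)
    have hb : labelOfIndepSets R S T t = head := by
      simpa using ⟨hT.prop.1 htT, htT, w, hwS, hwb.symm⟩
    simp [hw, hb, Fits, haS]

end labelOfIndepSets

theorem exists_isLabelling_hub_followed {n : ℕ} [NeZero n]
    (hreg : ∀ w, (R.neighborSet w).ncard = 2) (φ : ZMod n ≃ W) :
    ∃ L i, IsLabelling R L ∧ L (φ i) = hub ∧ (L (φ (i + 1)) = lone ∨ L (φ (i + 1)) = head) := by
  have : Finite W := Finite.of_equiv _ φ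
  obtain ⟨S, hSsup, hS⟩ := exists_maximal_isIndepSet_within R
    (Set.subset_univ {φ 0}) (Set.pairwise_singleton _ _)
  have hzero : φ 0 ∈ S := hSsup rfl
  obtain ⟨a, hadj⟩ : (R.neighborSet (φ 0)).Nonempty :=
    Set.nonempty_of_ncard_ne_zero (by simp [hreg])
  have haS : a ∉ S := fun haS => hS.prop.2 hzero haS hadj.ne hadj
  obtain ⟨i, hi, hi'⟩ := exists_and_not_add_one (P := fun i => φ i ∈ S) (b := φ.symm a) hzero
    (by simpa using haS)
  obtain ⟨T, hTsup, hT⟩ := exists_maximal_isIndepSet_within R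
    (Set.singleton_subset_iff.2 hi' : {φ (i + 1)} ⊆ Sᶜ) (Set.pairwise_singleton _ _)
  exact ⟨labelOfIndepSets R S T, i, isLabelling_labelOfIndepSets hreg hS hT,
    labelOfIndepSets_eq_hub.2 hi, labelOfIndepSets_of_mem hi' (hTsup rfl)⟩

end Labelling

section CycleColoring

/-- `e i` colors the cycle edge from `i` to `i + 1` and `p i` the matching edge at `i`.  Adjacent
vertices of the cycle differ in degree in the color of their edge, and a vertex of the cycle does
not have the degree of its partner, labelled `L i`, in the color of the matching edge. -/
structure IsCycleColoring {n : ℕ} (L : ZMod n → Label) (e p : ZMod n → Fin 3) : Prop where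
  eq_zero_iff : ∀ i, p i = 0 ↔ (L i).MatchedByZero
  count_ne_matchDegree : ∀ i, [e (i - 1), p i, e i].count (p i) ≠ (L i).matchDegree
  count_ne_count : ∀ i,
    [e (i - 1), p i, e i].count (e i) ≠ [e i, p (i + 1), e (i + 1)].count (e i)

/-- Passing a vertex of the cycle whose partner has label `l`.  A state `(c, d)` consists of the
color `c` of the edge just traversed and the degree `d` in that color of its first end; `p` is the
color of the matching edge at the vertex passed. -/
def Step (l : Label) (s t : Fin 3 × ℕ) : Prop :=
  ∃ p : Fin 3, (p = 0 ↔ l.MatchedByZero) ∧ [s.1, p, t.1].count p ≠ l.matchDegree ∧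
    [s.1, p, t.1].count s.1 ≠ s.2 ∧ [s.1, p, t.1].count t.1 = t.2

theorem exists_isCycleColoring_of_step {n : ℕ} {L : ZMod n → Label} {f : ZMod n → Fin 3 × ℕ}
    (hf : ∀ i, Step (L (i + 1)) (f i) (f (i + 1))) : ∃ e p, IsCycleColoring L e p := by
  have hf' : ∀ i, Step (L i) (f (i - 1)) (f i) := fun i => by simpa using hf (i - 1)
  choose p hzero hmatch hne heq using hf'
  refine ⟨fun i => (f i).1, p, hzero, hmatch, fun i => ?_⟩
  have hnext := hne (i + 1)
  rw [add_sub_cancel_right] at hnext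
  rw [heq]
  exact hnext.symm

theorem step_hub_zero {c : Fin 3} {d : ℕ} (hc : c ≠ 0) (hd : d ≠ 1) : Step hub (c, d) (0, 2) := by
  refine ⟨0, ?_⟩
  fin_cases c <;> simp_all [MatchedByZero, matchDegree, eq_comm]

theorem step_lone_of_zero : Step lone (0, 2) (1, 2) :=
  ⟨1, by simp [MatchedByZero, matchDegree]⟩

theorem step_head_of_zero : Step head (0, 2) (1, 1) :=
  ⟨2, by simp [MatchedByZero, matchDegree]⟩

/-- From recorded degree `d`, a vertex with label `l` can be passed with recorded degree `d'`, using
cycle edges of nonzero colors only. -/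
def DegreeStep (l : Label) (d d' : ℕ) : Prop :=
  ∀ c ≠ 0, ∃ c' ≠ 0, Step l (c, d) (c', d')

section DegreeStep

variable {l : Label} {d : ℕ}

theorem degreeStep_one_of_matchedByZero (hl : l.MatchedByZero) (hd : d ≠ 1) :
    DegreeStep l d 1 := by
  -- In `Fin 3`, the color other than `0` and `c` is `-c`.
  refine fun c hc => ⟨-c, neg_ne_zero.2 hc, 0, ?_⟩
  rcases hl with rfl | rfl <;> fin_cases c <;>
    simp_all [MatchedByZero, matchDegree, eq_comm, Fin.neg_def]

theorem degreeStep_two_of_matchedByZero (hl : l.MatchedByZero) (hd : d ≠ 2) :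
    DegreeStep l d 2 := by
  refine fun c hc => ⟨c, hc, 0, ?_⟩
  rcases hl with rfl | rfl <;> fin_cases c <;> simp_all [MatchedByZero, matchDegree, eq_comm]

theorem degreeStep_lone_one (hd : d ≠ 2) : DegreeStep lone d 1 := by
  refine fun c hc => ⟨-c, neg_ne_zero.2 hc, c, ?_⟩
  fin_cases c <;> simp_all [MatchedByZero, matchDegree, eq_comm, Fin.neg_def]

theorem degreeStep_lone_two (hd : d ≠ 1) : DegreeStep lone d 2 := by
  refine fun c hc => ⟨-c, neg_ne_zero.2 hc, -c, ?_⟩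
  fin_cases c <;> simp_all [MatchedByZero, matchDegree, eq_comm, Fin.neg_def]

theorem degreeStep_lone_three (hd : d ≠ 3) : DegreeStep lone d 3 := by
  refine fun c hc => ⟨c, hc, c, ?_⟩
  fin_cases c <;> simp_all [MatchedByZero, matchDegree, eq_comm]

theorem degreeStep_head_two (hd : d ≠ 2) : DegreeStep head d 2 := by
  refine fun c hc => ⟨c, hc, -c, ?_⟩
  fin_cases c <;> simp_all [MatchedByZero, matchDegree, eq_comm, Fin.neg_def]

theorem degreeStep_head_three (hd : d ≠ 3) : DegreeStep head d 3 := by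
  refine fun c hc => ⟨c, hc, c, ?_⟩
  fin_cases c <;> simp_all [MatchedByZero, matchDegree, eq_comm]

end DegreeStep

theorem exists_two_exits (l : Label) :
    ∃ a b x y : ℕ, x ≠ y ∧ (∀ d ≠ a, DegreeStep l d x) ∧ ∀ d ≠ b, DegreeStep l d y := by
  cases l with
  | hub => exact ⟨1, 2, 1, 2, by simp, fun d => degreeStep_one_of_matchedByZero (.inl rfl),
      fun d => degreeStep_two_of_matchedByZero (.inl rfl)⟩
  | tail => exact ⟨1, 2, 1, 2, by simp, fun d => degreeStep_one_of_matchedByZero (.inr rfl),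
      fun d => degreeStep_two_of_matchedByZero (.inr rfl)⟩
  | lone => exact ⟨2, 1, 1, 2, by simp, fun d => degreeStep_lone_one,
      fun d => degreeStep_lone_two⟩
  | head => exact ⟨2, 3, 2, 3, by simp, fun d => degreeStep_head_two,
      fun d => degreeStep_head_three⟩

theorem nontrivial_or_exists_degreeStep_toggle {l : Label} (hl : l ≠ head) (d : ℕ) :
    {d' | DegreeStep l d d'}.Nontrivial ∨ ∃ d', DegreeStep l d d' ∧ (d' = 1 ↔ d ≠ 1) := by
  by_cases hd : d = 1
  · subst hd
    right
    cases l with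
    | hub => exact ⟨2, degreeStep_two_of_matchedByZero (.inl rfl) (by simp), by simp⟩
    | tail => exact ⟨2, degreeStep_two_of_matchedByZero (.inr rfl) (by simp), by simp⟩
    | lone => exact ⟨3, degreeStep_lone_three (by simp), by simp⟩
    | head => exact absurd rfl hl
  · cases l with
    | hub => exact .inr ⟨1, degreeStep_one_of_matchedByZero (.inl rfl) hd, by simpa⟩
    | tail => exact .inr ⟨1, degreeStep_one_of_matchedByZero (.inr rfl) hd, by simpa⟩
    | lone =>
      by_cases hd2 : d = 2
      · subst hd2
        exact .inl ⟨2, degreeStep_lone_two (by simp), 3, degreeStep_lone_three (by simp), by simp⟩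
      · exact .inr ⟨1, degreeStep_lone_one hd2, by simpa⟩
    | head => exact absurd rfl hl

theorem nontrivial_or_exists_degreeStep_head (d : ℕ) :
    {d' | DegreeStep head d d'}.Nontrivial ∨ ∃ d', DegreeStep head d d' ∧ (d' = 1 ↔ d = 1) := by
  by_cases hd2 : d = 2
  · subst hd2
    exact .inr ⟨3, degreeStep_head_three (by simp), by simp⟩
  by_cases hd3 : d = 3
  · subst hd3
    exact .inr ⟨2, degreeStep_head_two (by simp), by simp⟩
  exact .inl ⟨2, degreeStep_head_two hd2, 3, degreeStep_head_three hd3, by simp⟩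

/-- The degrees that can be recorded, with an edge of nonzero color, after passing vertices labelled
`l 1, …, l k`; the walk starts behind the hub numbered `0`, where it traverses an edge of color `0`
and records degree `2`. -/
def reachableDegrees (l : ℕ → Label) (k : ℕ) : Set ℕ :=
  {d | ∃ c ≠ 0, Reachable (fun j => Step (l (j + 1))) (0, 2) k (c, d)}

section reachableDegrees

variable {l : ℕ → Label} {k : ℕ}

theorem DegreeStep.mem_reachableDegrees {d d' : ℕ} (h : DegreeStep (l (k + 1)) d d')
    (hd : d ∈ reachableDegrees l k) : d' ∈ reachableDegrees l (k + 1) := by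
  obtain ⟨c, hc, hreach⟩ := hd
  obtain ⟨c', hc', hstep⟩ := h c hc
  exact ⟨c', hc', hreach.step hstep⟩

theorem reachableDegrees_succ_nontrivial (h : (reachableDegrees l k).Nontrivial) :
    (reachableDegrees l (k + 1)).Nontrivial := by
  obtain ⟨a, b, x, y, hxy, hx, hy⟩ := exists_two_exits (l (k + 1))
  obtain ⟨d, hd, hda⟩ := h.exists_ne a
  obtain ⟨d', hd', hdb⟩ := h.exists_ne b
  exact ⟨x, (hx d hda).mem_reachableDegrees hd, y, (hy d' hdb).mem_reachableDegrees hd', hxy⟩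

theorem reachableDegrees_nontrivial_or_parity (h₀ : l 0 = hub) (h₁ : l 1 = lone ∨ l 1 = head)
    (k : ℕ) :
    (reachableDegrees l (k + 1)).Nontrivial ∨
      ∃ d ∈ reachableDegrees l (k + 1), (d = 1 ↔ Odd (Nat.count (l · ≠ head) (k + 2))) := by
  induction k with
  | zero =>
    right
    rcases h₁ with h₁ | h₁
    · exact ⟨2, ⟨1, by simp, .step .refl (by simpa [h₁] using step_lone_of_zero)⟩,
        by simp [Nat.count_succ, h₀, h₁]⟩
    · exact ⟨1, ⟨1, by simp, .step .refl (by simpa [h₁] using step_head_of_zero)⟩,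
        by simp [Nat.count_succ, h₀, h₁]⟩
  | succ k ih =>
    obtain hnontrivial | ⟨d, hd, hparity⟩ := ih
    · exact .inl (reachableDegrees_succ_nontrivial hnontrivial)
    have hsub : {d' | DegreeStep (l (k + 2)) d d'} ⊆ reachableDegrees l (k + 2) :=
      fun d' h => h.mem_reachableDegrees hd
    rw [Nat.count_succ]
    by_cases hl : l (k + 2) = head
    · rw [hl] at hsub
      refine (nontrivial_or_exists_degreeStep_head d).imp (·.mono hsub) ?_
      rintro ⟨d', hstep, hd'⟩
      exact ⟨d', hsub hstep, by simpa [hl, hd'] using hparity⟩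
    · refine (nontrivial_or_exists_degreeStep_toggle hl d).imp (·.mono hsub) ?_
      rintro ⟨d', hstep, hd'⟩
      exact ⟨d', hsub hstep, by simp [hl, hd', hparity, Nat.odd_add_one]⟩

theorem exists_mem_reachableDegrees_ne_one (h₀ : l 0 = hub) (h₁ : l 1 = lone ∨ l 1 = head)
    (heven : Even (Nat.count (l · ≠ head) (k + 2))) :
    ∃ d ∈ reachableDegrees l (k + 1), d ≠ 1 := by
  obtain hnontrivial | ⟨d, hd, hparity⟩ := reachableDegrees_nontrivial_or_parity h₀ h₁ k
  · exact hnontrivial.exists_ne 1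
  · exact ⟨d, hd, fun h => Nat.not_odd_iff_even.2 heven (hparity.1 h)⟩

end reachableDegrees

theorem exists_isCycleColoring {n : ℕ} (hn : 2 ≤ n) [NeZero n] {L : ZMod n → Label} {i₀ : ZMod n}
    (h₀ : L i₀ = hub) (h₁ : L (i₀ + 1) = lone ∨ L (i₀ + 1) = head)
    (heven : Even (Finset.univ.filter (L · ≠ head)).card) :
    ∃ e p, IsCycleColoring L e p := by
  obtain ⟨k, rfl⟩ := Nat.exists_eq_add_of_le' hn
  rw [card_filter_eq_count i₀] at heven
  obtain ⟨d, ⟨c, hc, hreach⟩, hd⟩ := exists_mem_reachableDegrees_ne_one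
    (l := fun j => L (i₀ + j)) (by simpa using h₀) (by simpa using h₁) heven
  have hlast : L (i₀ + (k + 1 + 1 : ℕ)) = hub := by
    rw [add_assoc k, ZMod.natCast_self, add_zero, h₀]
  have hclosed : Reachable (fun j => Step (L (i₀ + (j + 1 : ℕ)))) (0, 2) (k + 2) (0, 2) :=
    hreach.step (by simpa only [hlast] using step_hub_zero hc hd)
  obtain ⟨f, hf⟩ := Reachable.exists_cyclic (r := fun i => Step (L i)) hclosed
  exact exists_isCycleColoring_of_step hf

end CycleColoring

section RingPermGraph

open Sum

variable {n : ℕ} {W : Type*} {R : SimpleGraph W} {φ : ZMod n ≃ W} {L : W → Label}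
  {e : ZMod n → Fin 3} {p : W → Fin 3}

@[simp]
theorem ringPermGraph_adj_inl_inl [Fact (1 < n)] {i j : ZMod n} :
    (ringPermGraph n R φ).Adj (inl i) (inl j) ↔ j = i - 1 ∨ j = i + 1 := by
  simp only [ringPermGraph, SimpleGraph.fromRel_adj, ne_eq, inl.injEq]
  constructor
  · rintro ⟨-, h | h⟩
    · exact .inl (by rw [← h]; ring)
    · exact .inr (by rw [← h]; ring)
  · rintro (rfl | rfl) <;> simp [eq_sub_iff_add_eq]

@[simp]
theorem ringPermGraph_adj_inl_inr {i : ZMod n} {w : W} :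
    (ringPermGraph n R φ).Adj (inl i) (inr w) ↔ φ i = w := by
  simp [ringPermGraph]

@[simp]
theorem ringPermGraph_adj_inr_inr {w u : W} :
    (ringPermGraph n R φ).Adj (inr w) (inr u) ↔ R.Adj w u := by
  simpa [ringPermGraph, R.adj_comm u w] using SimpleGraph.Adj.ne

/-- The coloring of the ring permutation graph with color `e i` on the cycle edge from `i` to
`i + 1`, color `p w` on the matching edge at `w`, and `Label.edgeColor` on the edges of `R`. -/
def ringColoring (L : W → Label) (e : ZMod n → Fin 3) (p : W → Fin 3) :
    ZMod n ⊕ W → ZMod n ⊕ W → Fin 3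
  | inl i, inl j => if j = i + 1 then e i else if i = j + 1 then e j else 0
  | inl _, inr w => p w
  | inr w, inl _ => p w
  | inr w, inr u => edgeColor (L w) (L u) (p w) (p u)

theorem sub_one_ne_add_one [Fact (2 < n)] (i : ZMod n) : i - 1 ≠ i + 1 := by
  simpa [sub_eq_add_neg] using ZMod.neg_one_ne_one (n := n)

theorem ringColoring_comm [Fact (2 < n)] (x y : ZMod n ⊕ W) :
    ringColoring L e p x y = ringColoring L e p y x := by
  rcases x with i | w <;> rcases y with j | u
  · have hnot : ¬ (j = i + 1 ∧ i = j + 1) := by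
      rintro ⟨rfl, hi⟩
      exact sub_one_ne_add_one (i + 1) (by simpa using hi)
    simp only [ringColoring]
    split_ifs with hj hi <;> first | rfl | exact absurd ⟨hj, hi⟩ hnot
  · rfl
  · rfl
  · exact edgeColor_comm _ _ _ _

theorem colorDegree_inl [Fact (2 < n)] (i : ZMod n) (c : Fin 3) :
    colorDegree (ringPermGraph n R φ) (ringColoring L e p) (inl i) c =
      [e (i - 1), p (φ i), e i].count c := by
  have : Fact (1 < n) := ⟨Nat.lt_of_succ_lt Fact.out⟩
  have hne := sub_one_ne_add_one i
  rw [colorDegree_eq_count _ (l := [inl (i - 1), inr (φ i), inl (i + 1)])]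
  · simp [ringColoring, hne]
  · simp [hne]
  · rintro (j | w) <;> simp [eq_comm]

theorem colorDegree_inr {w a b : W} (hab : a ≠ b) (hN : R.neighborSet w = {a, b}) (c : Fin 3) :
    colorDegree (ringPermGraph n R φ) (ringColoring L e p) (inr w) c =
      [p w, edgeColor (L w) (L a) (p w) (p a), edgeColor (L w) (L b) (p w) (p b)].count c := by
  have hadj : ∀ v, R.Adj w v ↔ v = a ∨ v = b := fun v => Set.ext_iff.1 hN v
  rw [colorDegree_eq_count _ (l := [inl (φ.symm w), inr a, inr b])]
  · rfl
  · simp [hab]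
  · rintro (j | u)
    · simp [SimpleGraph.adj_comm _ (inr w), Equiv.eq_symm_apply]
    · simp [hadj]

section Matched

variable (hL : IsLabelling R L) (hp : ∀ w, p w = 0 ↔ (L w).MatchedByZero)
include hL hp

theorem colorDegree_inr_match (w : W) :
    colorDegree (ringPermGraph n R φ) (ringColoring L e p) (inr w) (p w) =
      (L w).matchDegree := by
  obtain ⟨a, b, hab, hN, hfit⟩ := hL w
  rw [colorDegree_inr hab hN, hfit.count_match (hp w) (hp b)]

theorem colorDegree_inr_zero_ne_three {w : W} (hw : L w ≠ hub) :
    colorDegree (ringPermGraph n R φ) (ringColoring L e p) (inr w) 0 ≠ 3 := by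
  obtain ⟨a, b, hab, hN, hfit⟩ := hL w
  rw [colorDegree_inr hab hN]
  exact hfit.count_zero_ne_three (hp w) (hp b) hw

theorem colorDegree_inr_tail {w u : W} (hwu : R.Adj w u) (hw : L w = tail) (hu : L u = head) :
    colorDegree (ringPermGraph n R φ) (ringColoring L e p) (inr w) (p u) = 1 := by
  obtain ⟨a, b, hab, hN, hfit⟩ := hL w
  obtain ⟨ha, hb⟩ : L a = hub ∧ L b = head := by simpa [hw, Fits] using hfit
  obtain rfl : u = b := by
    have hmem : u ∈ ({a, b} : Set W) := hN ▸ hwu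
    rcases hmem with rfl | rfl
    · simp [ha] at hu
    · rfl
  have hpw : p w = 0 := (hp w).2 (.inr hw)
  have hpu : p u ≠ 0 := by simp [hp, hu, MatchedByZero]
  rw [colorDegree_inr hab hN, hw, ha, hu, hpw]
  simp [edgeColor, hpu.symm]

theorem colorDegree_hub_ne {w u : W} (hw : L w = hub) (hu : L u ≠ hub) :
    colorDegree (ringPermGraph n R φ) (ringColoring L e p) (inr w) 0 ≠
      colorDegree (ringPermGraph n R φ) (ringColoring L e p) (inr u) 0 := by
  have hmatch := colorDegree_inr_match (φ := φ) (e := e) hL hp w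
  rw [(hp w).2 (.inl hw), hw] at hmatch
  rw [hmatch]
  exact (colorDegree_inr_zero_ne_three hL hp hu).symm

theorem colorDegree_head_ne_tail {w u : W} (hwu : R.Adj w u) (hw : L w = head)
    (hu : L u = tail) :
    colorDegree (ringPermGraph n R φ) (ringColoring L e p) (inr w) (p w) ≠
      colorDegree (ringPermGraph n R φ) (ringColoring L e p) (inr u) (p w) := by
  simp [colorDegree_inr_match hL hp, colorDegree_inr_tail hL hp hwu.symm hu hw, hw, matchDegree]

theorem colorDegree_inr_ne_inr {w u : W} (hwu : R.Adj w u) :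
    colorDegree (ringPermGraph n R φ) (ringColoring L e p) (inr w)
        (edgeColor (L w) (L u) (p w) (p u)) ≠
      colorDegree (ringPermGraph n R φ) (ringColoring L e p) (inr u)
        (edgeColor (L w) (L u) (p w) (p u)) := by
  rcases hL.labels_of_adj hwu with ⟨hw, hu⟩ | ⟨hu, hw⟩ | ⟨hw, hu⟩ | ⟨hu, hw⟩
  · simpa [hw] using colorDegree_hub_ne hL hp hw hu
  · simpa [hu, edgeColor_comm _ hub] using (colorDegree_hub_ne hL hp hu hw).symm
  · simpa [hw, hu, edgeColor] using colorDegree_head_ne_tail hL hp hwu hw hu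
  · simpa [hw, hu, edgeColor] using (colorDegree_head_ne_tail hL hp hwu.symm hu hw).symm

end Matched

section Cycle

variable [Fact (2 < n)] (h : IsCycleColoring (L ∘ φ) e (p ∘ φ))
include h

theorem colorDegree_inl_ne_inl (i : ZMod n) :
    colorDegree (ringPermGraph n R φ) (ringColoring L e p) (inl i) (e i) ≠
      colorDegree (ringPermGraph n R φ) (ringColoring L e p) (inl (i + 1)) (e i) := by
  rw [colorDegree_inl, colorDegree_inl, add_sub_cancel_right]
  exact h.count_ne_count i

theorem colorDegree_inl_ne_inr (hL : IsLabelling R L) (hp : ∀ w, p w = 0 ↔ (L w).MatchedByZero)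
    (i : ZMod n) :
    colorDegree (ringPermGraph n R φ) (ringColoring L e p) (inl i) (p (φ i)) ≠
      colorDegree (ringPermGraph n R φ) (ringColoring L e p) (inr (φ i)) (p (φ i)) := by
  rw [colorDegree_inl, colorDegree_inr_match hL hp]
  exact h.count_ne_matchDegree i

theorem hasLIEC_ringPermGraph (hL : IsLabelling R L) : HasLIEC (ringPermGraph n R φ) 3 := by
  have : Fact (1 < n) := ⟨Nat.lt_of_succ_lt Fact.out⟩
  have hp : ∀ w, p w = 0 ↔ (L w).MatchedByZero := fun w => by simpa using h.eq_zero_iff (φ.symm w)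
  have hcycle : ∀ i, ringColoring L e p (inl i) (inl (i + 1)) = e i := fun i => if_pos rfl
  refine hasLIEC_of_colorDegree_ne (ringColoring L e p) ringColoring_comm ?_
  rintro (i | w) (j | u) hadj
  · rcases ringPermGraph_adj_inl_inl.1 hadj with rfl | rfl
    · have hne := colorDegree_inl_ne_inl (R := R) h (i - 1)
      rw [← hcycle, sub_add_cancel, ringColoring_comm] at hne
      exact hne.symm
    · rw [hcycle]
      exact colorDegree_inl_ne_inl h i
  · obtain rfl := ringPermGraph_adj_inl_inr.1 hadj
    exact colorDegree_inl_ne_inr h hL hp i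
  · obtain rfl := ringPermGraph_adj_inl_inr.1 hadj.symm
    exact (colorDegree_inl_ne_inr h hL hp j).symm
  · exact colorDegree_inr_ne_inr hL hp (ringPermGraph_adj_inr_inr.1 hadj)

end Cycle

end RingPermGraph

/-- Every ring permutation graph admits a locally irregular edge-coloring with at most
3 colors. -/
theorem ringPermGraph_LIEC (n : ℕ) (hn : 3 ≤ n) {W : Type*} (R : SimpleGraph W)
    (hreg : ∀ w : W, (R.neighborSet w).ncard = 2) (φ : ZMod n ≃ W) :
    HasLIEC (ringPermGraph n R φ) 3 := by
  have : Fact (2 < n) := ⟨hn⟩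
  have : NeZero n := ⟨by omega⟩
  have : Fintype W := Fintype.ofEquiv _ φ
  obtain ⟨L, i, hL, hhub, hnext⟩ := exists_isLabelling_hub_followed hreg φ
  have hcard : (Finset.univ.filter ((L ∘ φ) · ≠ .head)).card =
      (Finset.univ.filter (L · ≠ .head)).card :=
    Finset.card_equiv φ (by simp)
  obtain ⟨e, p, hep⟩ := exists_isCycleColoring (L := L ∘ φ) (by omega) hhub hnext
    (hcard ▸ hL.even_card_ne_head)
  exact hasLIEC_ringPermGraph (p := p ∘ φ.symm) (by simpa [Function.comp_assoc] using hep) hL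
end

section
/- Every generalized Petersen graph P(n,k) satisfies χ'_irr(P(n,k)) ≤ 3, i.e., it admits a locally irregular edge-coloring using at most 3 colors. -/
/-- The generalized Petersen graph `P(n,k)` : `inl i` are the outer vertices `u_i`,
`inr i` are the inner vertices `v_i`, with edges `u_i u_{i+1}`, `u_i v_i`, `v_i v_{i+k}`
(indices modulo `n`). -/
def genPetersen (n k : ℕ) : SimpleGraph (ZMod n ⊕ ZMod n) :=
  SimpleGraph.fromRel (fun x y =>
    match x, y with
    | Sum.inl i, Sum.inl j => i - j = 1
    | Sum.inl i, Sum.inr j => i = j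
    | Sum.inr i, Sum.inr j => i - j = (k : ZMod n)
    | Sum.inr _, Sum.inl _ => False)

/-!
Give the inner edge `v_i v_{i+k}` the color of the spoke `u_i v_i`. Split the outer cycle into
monochromatic paths; at a vertex joining two of them the spoke gets the third color, and inside a
path every other spoke gets the color of the path. Then the degrees alternate between 3 and 2 along
a path and drop to 1 at its ends, so outer edges cause no conflict, and it remains to arrange that
the spoke colors differ along the inner steps `i ↦ i + k` often enough. For odd `k` alternation does
this by itself. For even `k ≥ 4` the alternation is shifted by one on every block of `k` consecutive
indices, and a path of color 2 absorbs the defect where the outer cycle closes up. The case `k = 2`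
and the prism `P(3,1)` have their own colorings.
-/

section ColorClasses

variable {V : Type*} {G : SimpleGraph V} {m : ℕ}

theorem fromEdgeSet_colorClass_adj (c : Sym2 V → Fin m) (a : Fin m) (u v : V) :
    (SimpleGraph.fromEdgeSet {e | e ∈ G.edgeSet ∧ c e = a}).Adj u v ↔
      G.Adj u v ∧ c s(u, v) = a := by
  rw [SimpleGraph.fromEdgeSet_adj]
  exact ⟨fun h => h.1, fun h => ⟨h, h.1.ne⟩⟩

theorem hasLIEC_iff_exists_ncard_ne :
    HasLIEC G m ↔ ∃ c : Sym2 V → Fin m, ∀ u v, G.Adj u v →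
      {w | G.Adj u w ∧ c s(u, w) = c s(u, v)}.ncard ≠
        {w | G.Adj v w ∧ c s(v, w) = c s(u, v)}.ncard := by
  simp only [HasLIEC, LocallyIrregular, SimpleGraph.neighborSet, fromEdgeSet_colorClass_adj]
  exact exists_congr fun c => ⟨fun h u v huv => h _ ⟨huv, rfl⟩,
    fun h a u v ⟨huv, ha⟩ => ha ▸ h u v huv⟩

theorem ncard_sep_triple {x y z : V} (hxy : x ≠ y) (hxz : x ≠ z) (hyz : y ≠ z)
    (p : V → Prop) [DecidablePred p] :
    {w | w ∈ ({x, y, z} : Set V) ∧ p w}.ncard =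
      (if p x then 1 else 0) + (if p y then 1 else 0) + (if p z then 1 else 0) := by
  classical
  have h_coe : {w | w ∈ ({x, y, z} : Set V) ∧ p w} =
      (({x, y, z} : Finset V).filter p : Set V) := by
    ext w; simp
  rw [h_coe, Set.ncard_coe_finset, Finset.card_filter, Finset.sum_insert (by simp [hxy, hxz]),
    Finset.sum_pair hyz, add_assoc]

end ColorClasses

namespace genPetersen

section Words

variable {n k m : ℕ}

theorem natCast_add_self_ne_zero {d : ℕ} (hd : 1 ≤ d) (hdn : 2 * d < n) :
    (d : ZMod n) + d ≠ 0 := by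
  rw [← Nat.cast_add, Ne, ZMod.natCast_eq_zero_iff]
  exact Nat.not_dvd_of_pos_of_lt (by omega) (by omega)

theorem one_add_one_ne_zero (hn : 3 ≤ n) : (1 : ZMod n) + 1 ≠ 0 := by
  simpa using natCast_add_self_ne_zero (d := 1) le_rfl (by omega : 2 * 1 < n)

theorem add_ne_sub_of_add_self_ne_zero {d : ZMod n} (hd : d + d ≠ 0) (i : ZMod n) :
    i + d ≠ i - d := fun h =>
  hd (by linear_combination h)

theorem neighborSet_inl (hn : 3 ≤ n) (i : ZMod n) :
    (genPetersen n k).neighborSet (Sum.inl i) =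
      {Sum.inl (i + 1), Sum.inl (i - 1), Sum.inr i} := by
  have : Fact (1 < n) := ⟨by omega⟩
  have h1 : (1 : ZMod n) ≠ 0 := one_ne_zero
  ext (j | j)
  · simp only [genPetersen, SimpleGraph.mem_neighborSet, SimpleGraph.fromRel_adj, ne_eq,
      Sum.inl.injEq, Set.mem_insert_iff, Set.mem_singleton_iff, reduceCtorEq, or_false]
    grind
  · simp [genPetersen, eq_comm]

theorem neighborSet_inr (hk : 1 ≤ k) (hkn : 2 * k < n) (i : ZMod n) :
    (genPetersen n k).neighborSet (Sum.inr i) =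
      {Sum.inr (i + k), Sum.inr (i - k), Sum.inl i} := by
  have hk0 : (k : ZMod n) ≠ 0 := fun h =>
    natCast_add_self_ne_zero hk hkn (by rw [h, add_zero])
  ext (j | j)
  · simp [genPetersen, eq_comm]
  · simp only [genPetersen, SimpleGraph.mem_neighborSet, SimpleGraph.fromRel_adj, ne_eq,
      Sum.inr.injEq, Set.mem_insert_iff, Set.mem_singleton_iff, reduceCtorEq, or_false]
    grind

/-- The edges of `P(n,k)`, one copy of `ZMod n` for each kind: the outer edges
`u_i u_{i+1}`, the spokes `u_i v_i` and the inner edges `v_i v_{i+k}`. -/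
def edge (n k : ℕ) : ZMod n ⊕ ZMod n ⊕ ZMod n → Sym2 (ZMod n ⊕ ZMod n)
  | Sum.inl i => s(Sum.inl i, Sum.inl (i + 1))
  | Sum.inr (Sum.inl i) => s(Sum.inl i, Sum.inr i)
  | Sum.inr (Sum.inr i) => s(Sum.inr i, Sum.inr (i + k))

theorem edge_injective (hk : 1 ≤ k) (hkn : 2 * k < n) :
    Function.Injective (edge n k) := by
  have h_two_mul := natCast_add_self_ne_zero hk hkn
  rintro (i | i | i) (j | j | j) h <;>
    simp only [edge, Sym2.eq_iff, Sum.inl.injEq, Sum.inr.injEq, reduceCtorEq, and_false,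
      false_and, or_false, and_self] at h ⊢
  all_goals grind

/-- The number of edges of color `c` at the `i`-th vertex of the rim (outer for `d = 1`,
inner for `d = k`) whose edge from `i` to `i + d` has color `r i`, the spoke at `i` having
color `s i`. -/
def colorDegree (d : ZMod n) (r s : ZMod n → Fin m) (c : Fin m) (i : ZMod n) : ℕ :=
  (if r i = c then 1 else 0) + (if r (i - d) = c then 1 else 0) + (if s i = c then 1 else 0)

theorem ncard_colorClass_inl (hn : 3 ≤ n) (c : Sym2 (ZMod n ⊕ ZMod n) → Fin m) (a : Fin m)
    (i : ZMod n) :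
    {w | (genPetersen n k).Adj (Sum.inl i) w ∧ c s(Sum.inl i, w) = a}.ncard =
      colorDegree 1 (fun j => c s(Sum.inl j, Sum.inl (j + 1)))
        (fun j => c s(Sum.inl j, Sum.inr j)) a i := by
  have h_ne := add_ne_sub_of_add_self_ne_zero (one_add_one_ne_zero hn) i
  simp only [← SimpleGraph.mem_neighborSet, neighborSet_inl hn]
  rw [ncard_sep_triple (by simpa using h_ne) (by simp) (by simp), colorDegree, sub_add_cancel,
    Sym2.eq_swap (a := Sum.inl (i - 1))]

theorem ncard_colorClass_inr (hk : 1 ≤ k) (hkn : 2 * k < n)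
    (c : Sym2 (ZMod n ⊕ ZMod n) → Fin m) (a : Fin m) (i : ZMod n) :
    {w | (genPetersen n k).Adj (Sum.inr i) w ∧ c s(Sum.inr i, w) = a}.ncard =
      colorDegree (k : ZMod n) (fun j => c s(Sum.inr j, Sum.inr (j + k)))
        (fun j => c s(Sum.inl j, Sum.inr j)) a i := by
  have h_ne := add_ne_sub_of_add_self_ne_zero (natCast_add_self_ne_zero hk hkn) i
  simp only [← SimpleGraph.mem_neighborSet, neighborSet_inr hk hkn]
  rw [ncard_sep_triple (by simpa using h_ne) (by simp) (by simp), colorDegree, sub_add_cancel,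
    Sym2.eq_swap (a := Sum.inr (i - k)), Sym2.eq_swap (a := Sum.inl i)]

theorem hasLIEC_of_words (hk : 1 ≤ k) (hkn : 2 * k < n) (o s g : ZMod n → Fin m)
    (h_outer : ∀ i, colorDegree 1 o s (o i) i ≠ colorDegree 1 o s (o i) (i + 1))
    (h_spoke : ∀ i, colorDegree 1 o s (s i) i ≠ colorDegree k g s (s i) i)
    (h_inner : ∀ i, colorDegree k g s (g i) i ≠ colorDegree k g s (g i) (i + k)) :
    HasLIEC (genPetersen n k) m := by
  have hn : 3 ≤ n := by omega
  obtain ⟨c, hc⟩ : ∃ c : Sym2 (ZMod n ⊕ ZMod n) → Fin m,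
      ∀ x, c (edge n k x) = Sum.elim o (Sum.elim s g) x :=
    ⟨_, (edge_injective hk hkn).extend_apply _ fun _ => o 0⟩
  have c_outer (i) : c s(Sum.inl i, Sum.inl (i + 1)) = o i := hc (Sum.inl i)
  have c_spoke (i) : c s(Sum.inl i, Sum.inr i) = s i := hc (Sum.inr (Sum.inl i))
  have c_inner (i) : c s(Sum.inr i, Sum.inr (i + k)) = g i := hc (Sum.inr (Sum.inr i))
  have c_outer' (i) : c s(Sum.inl i, Sum.inl (i - 1)) = o (i - 1) := by
    simpa [Sym2.eq_swap] using c_outer (i - 1)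
  have c_inner' (i) : c s(Sum.inr i, Sum.inr (i - k)) = g (i - k) := by
    simpa [Sym2.eq_swap] using c_inner (i - k)
  have c_spoke' (i) : c s(Sum.inr i, Sum.inl i) = s i := by rw [Sym2.eq_swap, c_spoke]
  refine hasLIEC_iff_exists_ncard_ne.2 ⟨c, fun u v huv => ?_⟩
  rw [← SimpleGraph.mem_neighborSet] at huv
  rcases u with i | i
  · rw [neighborSet_inl hn] at huv
    rcases huv with rfl | rfl | rfl <;>
      simp only [ncard_colorClass_inl hn, ncard_colorClass_inr hk hkn, c_outer, c_outer',
        c_spoke, c_inner]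
    · exact h_outer i
    · simpa only [sub_add_cancel] using (h_outer (i - 1)).symm
    · exact h_spoke i
  · rw [neighborSet_inr hk hkn] at huv
    rcases huv with rfl | rfl | rfl <;>
      simp only [ncard_colorClass_inl hn, ncard_colorClass_inr hk hkn, c_outer, c_inner, c_inner',
        c_spoke, c_spoke']
    · exact h_inner i
    · simpa only [sub_add_cancel] using (h_inner (i - k)).symm
    · exact (h_spoke i).symm

theorem hasLIEC_three_one : HasLIEC (genPetersen 3 1) 3 :=
  hasLIEC_of_words (by norm_num) (by norm_num)
    (o := ![2, 0, 2]) (s := ![0, 0, 1]) (g := ![0, 0, 1]) (by decide) (by decide) (by decide)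

end Words

section NatWords

variable {n k : ℕ}

/-- `a, b < n` represent residues modulo `n` with `b ≡ a + d`, where `d ≤ n`: either
`b = a + d` or the step wraps around. -/
def CyclicStep (n d a b : ℕ) : Prop :=
  a < n ∧ b < n ∧ (b = a + d ∨ b + n = a + d)

theorem cyclicStep_val_add {d : ℕ} (hd : d < n) (i : ZMod n) :
    CyclicStep n d i.val (i + d).val := by
  have : NeZero n := ⟨by omega⟩
  have h_lt := ZMod.val_lt i
  refine ⟨h_lt, ZMod.val_lt _, ?_⟩
  rw [ZMod.val_add, ZMod.val_natCast, Nat.mod_eq_of_lt hd, Nat.add_mod_eq_ite,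
    Nat.mod_eq_of_lt h_lt, Nat.mod_eq_of_lt hd]
  split_ifs <;> omega

theorem cyclicStep_val_sub {d : ℕ} (hd : d < n) (i : ZMod n) :
    CyclicStep n d (i - d).val i.val := by
  simpa using cyclicStep_val_add hd (i - d)

theorem CyclicStep.succ_or_wrap {a b : ℕ} (h : CyclicStep n 1 a b) :
    b = a + 1 ∧ a + 1 < n ∨ a + 1 = n ∧ b = 0 := by
  obtain ⟨ha, hb, hab⟩ := h
  omega

/-- Words `o` and `s` such that giving `u_i u_{i+1}` the color `o i` and both `u_i v_i` and
`v_i v_{i+k}` the color `s i`, for `i < n`, yields a locally irregular edge-coloring of `P(n,k)`: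
the ends of each outer edge, spoke and inner edge have distinct degrees in its color. Edges known
to have that color are cancelled from both sides. -/
structure IsGoodWordPair (n k : ℕ) (o s : ℕ → ℕ) : Prop where
  outer : ∀ {a b c}, CyclicStep n 1 a b → CyclicStep n 1 b c →
    (if o a = o b then 1 else 0) + (if s b = o b then 1 else 0) ≠
      (if o c = o b then 1 else 0) + (if s c = o b then 1 else 0)
  spoke : ∀ {a b z}, CyclicStep n 1 a b → CyclicStep n k z b →
    (if o b = s b then 1 else 0) + (if o a = s b then 1 else 0) ≠
      1 + (if s z = s b then 1 else 0)
  inner : ∀ {a b c}, CyclicStep n k a b → CyclicStep n k b c → s a = s b → s b ≠ s c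

theorem IsGoodWordPair.hasLIEC {o s : ℕ → ℕ} {m : ℕ} (h : IsGoodWordPair n k o s)
    (hk : 1 ≤ k) (hkn : 2 * k < n) (ho : ∀ i, o i < m) (hs : ∀ i, s i < m) :
    HasLIEC (genPetersen n k) m := by
  have next (i : ZMod n) : CyclicStep n 1 i.val (i + 1).val := by
    simpa using cyclicStep_val_add (by omega : 1 < n) i
  have prev (i : ZMod n) : CyclicStep n 1 (i - 1).val i.val := by
    simpa using cyclicStep_val_sub (by omega : 1 < n) i
  have hk_lt : k < n := by omega
  refine hasLIEC_of_words hk hkn (fun i => ⟨o i.val, ho _⟩) (fun i => ⟨s i.val, hs _⟩)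
    (fun i => ⟨s i.val, hs _⟩) (fun i => ?_) (fun i => ?_) (fun i => ?_) <;>
    simp only [colorDegree, Fin.mk.injEq, add_sub_cancel_right, if_true]
  · have := h.outer (prev i) (next i)
    omega
  · have := h.spoke (prev i) (cyclicStep_val_sub hk_lt i)
    omega
  · have := h.inner (cyclicStep_val_sub hk_lt i) (cyclicStep_val_add hk_lt i)
    split_ifs <;> omega

/-- A sufficient condition for `IsGoodWordPair`: the outer cycle is monochromatic or split into
monochromatic paths (runs) of length at least two, at whose ends the spoke has another color than
both adjacent edges, and along whose interior every other spoke has the color of the run. -/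
structure IsRunWordPair (n k : ℕ) (o s : ℕ → ℕ) : Prop where
  flank : ∀ {a b}, CyclicStep n 1 a b → (o a = s b ↔ o b = s b)
  two_le_length : ∀ {a b c}, CyclicStep n 1 a b → CyclicStep n 1 b c → o a ≠ o b → o b = o c
  alternate : ∀ {a b c}, CyclicStep n 1 a b → CyclicStep n 1 b c → o a = o b → o b = o c →
    (s b = o b ↔ s c ≠ o b)
  spoke : ∀ {z b}, CyclicStep n k z b → o b = s b → s z ≠ s b
  inner : ∀ {a b c}, CyclicStep n k a b → CyclicStep n k b c → s a = s b → s b ≠ s c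

theorem IsRunWordPair.isGoodWordPair {o s : ℕ → ℕ} (h : IsRunWordPair n k o s) :
    IsGoodWordPair n k o s where
  outer {a b c} hab hbc := by
    have h_flank_b := h.flank hab
    have h_flank_c := h.flank hbc
    have h_length := h.two_le_length hab hbc
    have h_alternate := h.alternate hab hbc
    split_ifs <;> omega
  spoke {a b z} hab hzb := by
    have h_flank := h.flank hab
    have h_spoke := h.spoke hzb
    split_ifs <;> omega
  inner := h.inner

end NatWords

section OddStep

variable {n k : ℕ}

/-- Colors of the outer edges of `P(n,k)` for `k` odd: a single run of color `1` if `n` is even,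
otherwise one run of color `1` and one run of color `2`. -/
def oddStepOuter (n k i : ℕ) : ℕ :=
  if n % 2 = 1 ∧ n ≤ i + k + 2 ∧ i + 1 < n then 2 else 1

/-- Colors of the spokes and inner edges of `P(n,k)` for `k` odd. Color `0`
alternates with the color of the run. -/
def oddStepSpoke (n k i : ℕ) : ℕ :=
  if n % 2 = 1 ∧ n ≤ i + k + 2 then 2 * (i % 2) else (i + 1) % 2

theorem isRunWordPair_oddStep (hk : Odd k) (hkn : 2 * k < n) (h_ne : ¬(n = 3 ∧ k = 1)) :
    IsRunWordPair n k (oddStepOuter n k) (oddStepSpoke n k) where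
  flank {a b} hab := by
    grind [CyclicStep, oddStepOuter, oddStepSpoke]
  two_le_length {a b c} hab hbc := by
    grind [CyclicStep, oddStepOuter]
  alternate {a b c} hab hbc := by
    grind (splits := 15) [CyclicStep, oddStepOuter, oddStepSpoke]
  spoke {z b} hzb := by
    grind [CyclicStep, oddStepOuter, oddStepSpoke]
  inner {a b c} hab hbc := by
    grind [CyclicStep, oddStepSpoke]

theorem hasLIEC_three_of_odd (hk : Odd k) (hkn : 2 * k < n) (h_ne : ¬(n = 3 ∧ k = 1)) :
    HasLIEC (genPetersen n k) 3 :=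
  (isRunWordPair_oddStep hk hkn h_ne).isGoodWordPair.hasLIEC hk.pos hkn
    (fun i => by grind [oddStepOuter]) (fun i => by grind [oddStepSpoke])

end OddStep

section EvenStep

variable {n k i j : ℕ}

/-- The largest even number below `n - k`. For `k` even, the outer edges of `P(n,k)` from this
index on form the run of color `2` that closes the outer cycle. -/
def seamStart (n k : ℕ) : ℕ :=
  2 * ((n - k - 1) / 2)

/-- Number of the block of `k` consecutive indices containing `i`, the last block
before `seamStart n k` absorbing all larger indices. -/
def blockIndex (n k i : ℕ) : ℕ :=
  min i (seamStart n k - 1) / k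

theorem blockIndex_mono (h : i ≤ j) : blockIndex n k i ≤ blockIndex n k j :=
  Nat.div_le_div_right (by omega)

theorem blockIndex_add_le (hk : 0 < k) (h : j ≤ k) :
    blockIndex n k (i + j) ≤ blockIndex n k i + 1 := by
  rw [blockIndex, blockIndex, ← Nat.add_div_right _ hk]
  exact Nat.div_le_div_right (by omega)

theorem blockIndex_add_self (hk : 0 < k) (h : i + k < seamStart n k) :
    blockIndex n k (i + k) = blockIndex n k i + 1 := by
  rw [blockIndex, blockIndex, ← Nat.add_div_right _ hk]
  congr 1
  omega

theorem blockIndex_of_lt (h : i < k) : blockIndex n k i = 0 :=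
  Nat.div_eq_of_lt (by omega)

theorem blockIndex_succ_of_even (hk : Even k) (hi : Even i) :
    blockIndex n k (i + 1) = blockIndex n k i := by
  obtain h | h := le_or_gt (i + 1) (seamStart n k - 1)
  · rw [blockIndex, blockIndex, min_eq_left h, min_eq_left (by omega)]
    exact Nat.succ_div_of_not_dvd fun h_dvd =>
      Nat.not_even_iff_odd.2 hi.add_one (hk.trans_dvd h_dvd)
  · rw [blockIndex, blockIndex, min_eq_right h.le, min_eq_right (by omega)]

/-- Colors of the outer edges of `P(n,k)` for `k` even: the blocks below `seamStart n k` are runs of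
color `0` and `1` alternately, the last two edges of each block but the last one being recolored
with `2`. -/
def evenStepOuter (n k i : ℕ) : ℕ :=
  if i < seamStart n k ∧ blockIndex n k (i + 2) = blockIndex n k i then blockIndex n k i % 2
  else 2

/-- Colors of the spokes and inner edges of `P(n,k)` for `k` even: `0` and `1` alternately, with a
shift by one from each block to the next so that indices differing by `k` get different colors,
then `2` on even indices. -/
def evenStepSpoke (n k i : ℕ) : ℕ :=
  if i ≤ seamStart n k then (blockIndex n k i + i + 1) % 2
  else if i % 2 = 0 then 2
  else if n % 2 = 0 ∧ n ≤ i + k then 1 else 0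

theorem blockIndex_of_seamStart_le (h : seamStart n k ≤ i + 1) :
    blockIndex n k i = (seamStart n k - 1) / k := by
  rw [blockIndex, min_eq_right (by omega)]

-- The block index jumps at most once between `i` and `i + k`, at `j`; no jump is `i + k < j`.
theorem exists_blockIndex_eq_add_ite (hk : Even k) (hk0 : 0 < k) (i : ℕ) :
    ∃ j, i < j ∧ Even j ∧ (j < seamStart n k ∨ i + k < j) ∧
      ∀ l ≤ k, blockIndex n k (i + l) = blockIndex n k i + if j ≤ i + l then 1 else 0 := by
  have h_le (l) (hl : l ≤ k) := blockIndex_add_le (n := n) (i := i) hk0 hl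
  by_cases h_jump : ∃ l, l ≤ k ∧ blockIndex n k (i + l) ≠ blockIndex n k i
  · classical
    obtain ⟨h_find_le, h_find_ne⟩ := Nat.find_spec h_jump
    have h_min (l) (hl : l < Nat.find h_jump) := Nat.find_min h_jump hl
    generalize Nat.find h_jump = l₀ at *
    obtain ⟨l, rfl⟩ : ∃ l, l₀ = l + 1 :=
      Nat.exists_eq_succ_of_ne_zero fun h => h_find_ne (by rw [h, add_zero])
    have h_before : blockIndex n k (i + l) = blockIndex n k i := by grind
    refine ⟨i + (l + 1), by omega, ?_, Or.inl ?_, fun l' hl' => ?_⟩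
    · by_contra h_odd
      have := blockIndex_succ_of_even (n := n) (i := i + l) hk (by grind)
      grind
    · by_contra h_seam
      have := blockIndex_of_seamStart_le (n := n) (k := k) (i := i + l) (by omega)
      have := blockIndex_of_seamStart_le (n := n) (k := k) (i := i + (l + 1)) (by omega)
      omega
    · have := blockIndex_mono (n := n) (k := k) (by omega : i ≤ i + l')
      have := h_le l' hl'
      split_ifs with h
      · have := blockIndex_mono (n := n) (k := k) h
        have := blockIndex_mono (n := n) (k := k) (by omega : i ≤ i + (l + 1))
        omega
      · grind
  · refine ⟨i + k + (if Even (i + k) then 2 else 1), ?_, ?_, ?_, ?_⟩ <;> grind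

theorem evenStepOuter_of_add_two_lt (hkn : 2 * k < n) (hi : i + 2 < k) :
    evenStepOuter n k i = 0 := by
  have h_lt : i < seamStart n k := by grind [seamStart]
  rw [evenStepOuter, blockIndex_of_lt hi, blockIndex_of_lt (by omega), if_pos ⟨h_lt, rfl⟩]

theorem evenStepOuter_of_seamStart_le (h : seamStart n k ≤ i) : evenStepOuter n k i = 2 :=
  if_neg fun h_lt => by omega

theorem evenStep_flank (hk : Even k) (hk4 : 4 ≤ k) (hkn : 2 * k < n) {a b : ℕ}
    (hab : CyclicStep n 1 a b) :
    evenStepOuter n k a = evenStepSpoke n k b ↔ evenStepOuter n k b = evenStepSpoke n k b := by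
  obtain ⟨rfl, _⟩ | ⟨ha, rfl⟩ := hab.succ_or_wrap
  · obtain ⟨j, h_lt, h_even, h_seam, h_eq⟩ :=
      exists_blockIndex_eq_add_ite (n := n) hk (by omega) a
    grind [evenStepSpoke, evenStepOuter, seamStart]
  · have h_before : evenStepOuter n k a = 2 :=
      evenStepOuter_of_seamStart_le (by grind [seamStart])
    have h_after : evenStepOuter n k 0 = 0 := evenStepOuter_of_add_two_lt hkn (by omega)
    have h_spoke : evenStepSpoke n k 0 = 1 := by simp [evenStepSpoke, blockIndex]
    omega

theorem evenStep_two_le_length (hk : Even k) (hk4 : 4 ≤ k) (hkn : 2 * k < n) {a b c : ℕ}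
    (hab : CyclicStep n 1 a b) (hbc : CyclicStep n 1 b c)
    (h_ne : evenStepOuter n k a ≠ evenStepOuter n k b) :
    evenStepOuter n k b = evenStepOuter n k c := by
  obtain ⟨rfl, _⟩ | ⟨ha, rfl⟩ := hab.succ_or_wrap
  · obtain ⟨rfl, _⟩ | ⟨hb, rfl⟩ := hbc.succ_or_wrap
    · obtain ⟨j, h_lt, h_even, h_seam, h_eq⟩ :=
        exists_blockIndex_eq_add_ite (n := n) hk (by omega) a
      grind [evenStepOuter, seamStart]
    · refine absurd ?_ h_ne
      rw [evenStepOuter_of_seamStart_le, evenStepOuter_of_seamStart_le] <;> grind [seamStart]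
  · obtain ⟨rfl, -⟩ | ⟨hn, -⟩ := hbc.succ_or_wrap
    · rw [evenStepOuter_of_add_two_lt hkn, evenStepOuter_of_add_two_lt hkn] <;> omega
    · omega

theorem evenStep_alternate (hk : Even k) (hk4 : 4 ≤ k) (hkn : 2 * k < n) {a b c : ℕ}
    (hab : CyclicStep n 1 a b) (hbc : CyclicStep n 1 b c)
    (h_ab : evenStepOuter n k a = evenStepOuter n k b)
    (h_bc : evenStepOuter n k b = evenStepOuter n k c) :
    evenStepSpoke n k b = evenStepOuter n k b ↔ evenStepSpoke n k c ≠ evenStepOuter n k b := by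
  obtain ⟨rfl, _⟩ | ⟨ha, rfl⟩ := hab.succ_or_wrap
  · obtain ⟨rfl, _⟩ | ⟨hb, rfl⟩ := hbc.succ_or_wrap
    · obtain ⟨j, h_lt, h_even, h_seam, h_eq⟩ :=
        exists_blockIndex_eq_add_ite (n := n) hk (by omega) a
      grind [evenStepSpoke, evenStepOuter, seamStart]
    · grind [evenStepOuter_of_seamStart_le, evenStepOuter_of_add_two_lt, seamStart]
  · grind [evenStepOuter_of_seamStart_le, evenStepOuter_of_add_two_lt, seamStart]

theorem evenStepSpoke_ne (hk : Even k) (hk0 : 0 < k) (hkn : 2 * k < n) {z b : ℕ}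
    (h : CyclicStep n k z b) (hb : b < seamStart n k ∨ b < z) :
    evenStepSpoke n k z ≠ evenStepSpoke n k b := by
  obtain ⟨hz, -, rfl | h_wrap⟩ := h
  · have := blockIndex_add_self (n := n) hk0 (by omega : z + k < seamStart n k)
    grind [evenStepSpoke]
  · have := blockIndex_of_lt (n := n) (by omega : b < k)
    grind [evenStepSpoke, seamStart]

theorem isRunWordPair_evenStep (hk : Even k) (hk4 : 4 ≤ k) (hkn : 2 * k < n) :
    IsRunWordPair n k (evenStepOuter n k) (evenStepSpoke n k) where
  flank := evenStep_flank hk hk4 hkn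
  two_le_length := evenStep_two_le_length hk hk4 hkn
  alternate := evenStep_alternate hk hk4 hkn
  spoke {z b} hzb h := by
    by_cases hb : b < seamStart n k ∨ b < z
    · exact evenStepSpoke_ne hk (by omega) hkn hzb hb
    · obtain ⟨-, hb_lt, h_step⟩ := hzb
      grind [evenStepSpoke, evenStepOuter, seamStart]
  inner {a b c} hab hbc h_ab h_bc := by
    have hb : ¬(b < seamStart n k ∨ b < a) := fun hb =>
      evenStepSpoke_ne hk (by omega) hkn hab hb h_ab
    have hc : ¬(c < seamStart n k ∨ c < b) := fun hc =>
      evenStepSpoke_ne hk (by omega) hkn hbc hc h_bc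
    obtain ⟨-, -, h_step⟩ := hab
    obtain ⟨-, hc_lt, h_step'⟩ := hbc
    obtain rfl | rfl : b = seamStart n k ∨ b = seamStart n k + 1 := by grind [seamStart]
    all_goals grind [evenStepSpoke, seamStart]

theorem hasLIEC_three_of_even (hk : Even k) (hk4 : 4 ≤ k) (hkn : 2 * k < n) :
    HasLIEC (genPetersen n k) 3 :=
  (isRunWordPair_evenStep hk hk4 hkn).isGoodWordPair.hasLIEC (by omega) hkn
    (fun i => by grind [evenStepOuter]) (fun i => by grind [evenStepSpoke])

end EvenStep

section StepTwo

variable {n : ℕ}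

/-- Colors of the outer edges of `P(n,2)`: the word `110` repeated, modified near `n` when
`3 ∤ n`. -/
def stepTwoOuter (n i : ℕ) : ℕ :=
  if n % 3 = 1 ∧ n ≤ i + 4 ∨ n % 3 = 2 ∧ i + 1 = n then 2
  else if n % 3 = 2 ∧ i + 2 = n ∨ i % 3 = 2 then 0 else 1

/-- Colors of the spokes and inner edges of `P(n,2)`: the word `002` repeated, modified near `n`
when `3 ∤ n`. -/
def stepTwoSpoke (n i : ℕ) : ℕ :=
  if n % 3 = 1 ∧ i + 1 = n then 1
  else if n % 3 = 2 ∧ n ≤ i + 2 ∨ i % 3 = 2 then 2 else 0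

theorem isGoodWordPair_stepTwo (hn : 5 ≤ n) :
    IsGoodWordPair n 2 (stepTwoOuter n) (stepTwoSpoke n) where
  outer {a b c} hab hbc := by
    obtain ⟨rfl, hb⟩ | ⟨ha, rfl⟩ := hab.succ_or_wrap <;>
    obtain ⟨rfl, hc⟩ | ⟨hb, rfl⟩ := hbc.succ_or_wrap <;>
    grind (splits := 20) [stepTwoOuter, stepTwoSpoke]
  spoke {a b z} hab hzb := by
    obtain ⟨hz, -, h_step⟩ := hzb
    obtain ⟨rfl, hb⟩ | ⟨ha, rfl⟩ := hab.succ_or_wrap <;>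
    grind (splits := 20) [stepTwoOuter, stepTwoSpoke]
  inner {a b c} hab hbc h := by
    grind (splits := 20) [CyclicStep, stepTwoSpoke]

theorem hasLIEC_three_of_step_two (hn : 5 ≤ n) : HasLIEC (genPetersen n 2) 3 :=
  (isGoodWordPair_stepTwo hn).hasLIEC (by norm_num) (by omega)
    (fun i => by grind [stepTwoOuter]) (fun i => by grind [stepTwoSpoke])

end StepTwo

end genPetersen

/-- Every generalized Petersen graph `P(n,k)` (with `n ≥ 3` and `1 ≤ k < n/2`) admits a
locally irregular edge-coloring with at most 3 colors. -/
theorem genPetersen_LIEC (n k : ℕ) (hn : 3 ≤ n) (hk : 1 ≤ k) (hkn : 2 * k < n) :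
    HasLIEC (genPetersen n k) 3 := by
  rcases Nat.even_or_odd k with h_even | h_odd
  · obtain rfl | hk4 : k = 2 ∨ 4 ≤ k := by grind
    · exact genPetersen.hasLIEC_three_of_step_two (by omega)
    · exact genPetersen.hasLIEC_three_of_even h_even hk4 hkn
  · by_cases h_prism : n = 3 ∧ k = 1
    · obtain ⟨rfl, rfl⟩ := h_prism
      exact genPetersen.hasLIEC_three_one
    · exact genPetersen.hasLIEC_three_of_odd h_odd hkn h_prism
end
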